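/- arXiv:1808.00551 — 4 statements merged into one kernel-verified Lean document; each statement's English description precedes it below -/
import Mathlib

section
/- Every tree T on n nodes is partition induced on any set S of 2n points in convex position in ℝ²: there exists a partition of S into n parts, each of size 2, such that conv(S_i) ∩ conv(S_j) ≠ ∅ if and only if {i,j} is an edge of T (and all triple intersections of distinct parts are empty). -/
namespace TreeChord

/-- Signed area of a triangle. -/
def ori (a b c : Fin 2 → ℝ) : ℝ :=
  (b 0 - a 0) * (c 1 - a 1) - (b 1 - a 1) * (c 0 - a 0)

lemma ori_rot (a b c : Fin 2 → ℝ) : ori b c a = ori a b c := by simp only [ori]; ring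
lemma ori_swap (a b c : Fin 2 → ℝ) : ori a c b = - ori a b c := by simp only [ori]; ring

lemma mem_hull3 (s : Set (Fin 2 → ℝ)) (x a b c : Fin 2 → ℝ) (ha : a ∈ s) (hb : b ∈ s) (hc : c ∈ s)
    (h1 : 0 < ori x b c) (h2 : 0 < ori a x c) (h3 : 0 < ori a b x) : x ∈ convexHull ℝ s := by
  have hsum : ori x b c + ori a x c + ori a b x = ori a b c := by simp only [ori]; ring
  have hpos : 0 < ori a b c := by linarith
  have hC := convex_convexHull ℝ s
  have key := hC.sum_mem (t := Finset.univ) (w := ![ori x b c / ori a b c, ori a x c / ori a b c,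
      ori a b x / ori a b c]) (z := ![a, b, c]) ?_ ?_ ?_
  · have : x = ∑ i, (![ori x b c / ori a b c, ori a x c / ori a b c,
      ori a b x / ori a b c] : Fin 3 → ℝ) i • (![a, b, c] : Fin 3 → Fin 2 → ℝ) i := by
      ext i
      simp only [Fin.sum_univ_three, Matrix.cons_val, Pi.add_apply, Pi.smul_apply, smul_eq_mul]
      field_simp
      fin_cases i <;> simp only [ori] <;> simp <;> ring
    rw [this]; exact key
  · intro i _
    fin_cases i <;> simp <;> positivity
  · simp only [Fin.sum_univ_three, Matrix.cons_val]
    rw [← add_div, ← add_div, hsum, div_self hpos.ne']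
  · intro i _
    fin_cases i
    · exact subset_convexHull ℝ s ha
    · exact subset_convexHull ℝ s hb
    · exact subset_convexHull ℝ s hc

lemma collinear_of_ori (a b c : Fin 2 → ℝ) (hab : a ≠ b) (h : ori a b c = 0) :
    Collinear ℝ ({a, b, c} : Set (Fin 2 → ℝ)) := by
  rw [collinear_iff_of_mem (p₀ := a) (by simp)]
  refine ⟨b - a, ?_⟩
  have hex : ∃ r : ℝ, c = r • (b - a) +ᵥ a := by
    by_cases h0 : b 0 = a 0
    · have h1 : b 1 - a 1 ≠ 0 := by
        intro h1
        apply hab; ext i; fin_cases i <;> simp <;> linarith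
      refine ⟨(c 1 - a 1) / (b 1 - a 1), ?_⟩
      simp only [ori] at h
      ext i
      simp only [vadd_eq_add, Pi.add_apply, Pi.smul_apply, Pi.sub_apply, smul_eq_mul]
      fin_cases i
      · have : (b 1 - a 1) * (c 0 - a 0) = 0 := by rw [h0] at h; linarith
        have := (mul_eq_zero.1 this).resolve_left h1
        simp [h0]; linarith
      · simp; field_simp; ring
    · have h1 : b 0 - a 0 ≠ 0 := sub_ne_zero.2 h0
      refine ⟨(c 0 - a 0) / (b 0 - a 0), ?_⟩
      simp only [ori] at h
      ext i
      simp only [vadd_eq_add, Pi.add_apply, Pi.smul_apply, Pi.sub_apply, smul_eq_mul]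
      fin_cases i
      · simp; field_simp; ring
      · simp; field_simp; linarith
  intro p hp
  simp only [Set.mem_insert_iff, Set.mem_singleton_iff] at hp
  rcases hp with rfl | rfl | rfl
  · exact ⟨0, by simp⟩
  · exact ⟨1, by simp⟩
  · exact hex

lemma ori_affine (a b c d : Fin 2 → ℝ) (s t : ℝ) (h : s + t = 1) :
    ori a b (s • c + t • d) = s * ori a b c + t * ori a b d := by
  have : s = 1 - t := by linarith
  subst this
  simp only [ori, Pi.add_apply, Pi.smul_apply, smul_eq_mul]; ring

lemma seg_disj (a b c d : Fin 2 → ℝ) (h : 0 < ori a b c * ori a b d) :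
    ¬ (segment ℝ a b ∩ segment ℝ c d).Nonempty := by
  rintro ⟨x, ⟨s, t, hs, ht, hst, rfl⟩, ⟨s', t', hs', ht', hst', hx⟩⟩
  have h1 := ori_affine a b a b s t hst
  have h2 := ori_affine a b c d s' t' hst'
  rw [hx, h1] at h2
  have e1 : ori a b a = 0 := by simp only [ori]; ring
  have e2 : ori a b b = 0 := by simp only [ori]; ring
  rw [e1, e2] at h2
  rcases pos_and_pos_or_neg_and_neg_of_mul_pos h with ⟨h3, h4⟩ | ⟨h3, h4⟩ <;>
    rcases hs'.eq_or_lt with h5 | h5 <;> nlinarith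

lemma seg_cross (a b c d : Fin 2 → ℝ) (h1 : 0 < ori a b c) (h2 : 0 < ori a c d)
    (h3 : 0 < ori a b d) (h4 : 0 < ori b c d) :
    (segment ℝ a c ∩ segment ℝ b d).Nonempty := by
  have hs : ori b c d + ori a b d = ori a b c + ori a c d := by simp only [ori]; ring
  refine ⟨(ori a c d / (ori a b c + ori a c d)) • b + (ori a b c / (ori a b c + ori a c d)) • d,
    ⟨ori b c d / (ori a b c + ori a c d), ori a b d / (ori a b c + ori a c d), by positivity,
      by positivity, ?_, ?_⟩, ⟨_, _, by positivity, by positivity, ?_, rfl⟩⟩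
  · rw [← add_div, hs, div_self (by positivity)]
  · ext i
    simp only [Pi.add_apply, Pi.smul_apply, smul_eq_mul]
    field_simp
    fin_cases i <;> simp only [ori] <;> simp <;> ring
  · rw [← add_div, add_comm, div_self (by positivity)]

lemma sto_enum {α : Type} [Fintype α] (r : α → α → Prop) (hr : IsStrictTotalOrder α r) (N : ℕ)
    (h : Fintype.card α = N) : ∃ e : Fin N ≃ α, ∀ i j, i < j → r (e i) (e j) := by
  classical
  letI : LinearOrder α := linearOrderOfSTO r
  have e := Fintype.orderIsoFinOfCardEq α h
  exact ⟨e.toEquiv, fun i j hij => e.strictMono hij⟩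

lemma exists_enum (N : ℕ) (S : Finset (Fin 2 → ℝ)) (hcard : S.card = N)
    (hconv : ∀ x ∈ S, x ∉ convexHull ℝ ((S : Set (Fin 2 → ℝ)) \ {x}))
    (hgen : ∀ x ∈ S, ∀ y ∈ S, ∀ z ∈ S, x ≠ y → y ≠ z → x ≠ z →
      ¬ Collinear ℝ ({x, y, z} : Set (Fin 2 → ℝ))) :
    ∃ q : Fin N ≃ S, ∀ i j k, i < j → j < k → 0 < ori (q i : Fin 2 → ℝ) (q j) (q k) := by
  classical
  rcases Nat.eq_zero_or_pos N with rfl | hN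
  · exact ⟨Fintype.equivOfCardEq (by simpa using hcard.symm), fun i => i.elim0⟩
  obtain ⟨o, ho⟩ : S.Nonempty := by rw [← Finset.card_pos]; omega
  have hne : ∀ x ∈ S, ∀ y ∈ S, ∀ z ∈ S, x ≠ y → y ≠ z → x ≠ z → ori x y z ≠ 0 :=
    fun x hx y hy z hz h1 h2 h3 h => hgen x hx y hy z hz h1 h2 h3 (collinear_of_ori x y z h1 h)
  have hin : ∀ x ∈ S, ∀ a ∈ S, ∀ b ∈ S, ∀ c ∈ S, a ≠ x → b ≠ x → c ≠ x →
      0 < ori x b c → 0 < ori a x c → 0 < ori a b x → False := by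
    intro x hx a ha b hb c hc h1 h2 h3 h4 h5 h6
    exact hconv x hx (mem_hull3 _ x a b c ⟨ha, h1⟩ ⟨hb, h2⟩ ⟨hc, h3⟩ h4 h5 h6)
  have self1 : ∀ a b : Fin 2 → ℝ, ori a b b = 0 := fun a b => by simp only [ori]; ring
  have trans1 : ∀ y ∈ S, ∀ z ∈ S, ∀ w ∈ S, y ≠ o → z ≠ o → w ≠ o →
      0 < ori o y z → 0 < ori o z w → 0 < ori o y w := by
    intro y hy z hz w hw h1 h2 h3 h4 h5
    by_contra h6
    have hyw : y ≠ w := by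
      rintro rfl
      rw [ori_swap] at h5; linarith
    have h7 := hne o ho y hy w hw h1.symm hyw h3.symm
    have h8 : ori o y w < 0 := lt_of_le_of_ne (not_lt.1 h6) h7
    refine hin o ho y hy z hz w hw h1 h2 h3 h5 ?_ ?_
    · have : ori y o w = - ori o y w := by simp only [ori]; ring
      linarith
    · rw [ori_rot]; exact h4
  let r : S → S → Prop := fun y z =>
    (y.1 = o ∧ z.1 ≠ o) ∨ (y.1 ≠ o ∧ z.1 ≠ o ∧ 0 < ori o y z)
  have hr : IsStrictTotalOrder S r :=
    { trichotomous := by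
        intro y z h1 h2
        by_contra h3
        have h3' : y.1 ≠ z.1 := fun h => h3 (Subtype.ext h)
        by_cases hy : y.1 = o
        · exact h1 (Or.inl ⟨hy, fun h => h3' (hy.trans h.symm)⟩)
        by_cases hz : z.1 = o
        · exact h2 (Or.inl ⟨hz, hy⟩)
        rcases lt_or_gt_of_ne (hne o ho y y.2 z z.2 (Ne.symm hy) h3' (Ne.symm hz)) with h | h
        · exact h2 (Or.inr ⟨hz, hy, by rw [ori_swap]; linarith⟩)
        · exact h1 (Or.inr ⟨hy, hz, h⟩)
      irrefl := by
        rintro y (⟨h1, h2⟩ | ⟨_, _, h⟩)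
        · exact h2 h1
        · rw [self1] at h; exact lt_irrefl _ h
      trans := by
        rintro y z w (⟨h1, h2⟩ | ⟨h1, h2, h3⟩) (⟨h4, h5⟩ | ⟨h4, h5, h6⟩)
        · exact absurd h4 h2
        · exact Or.inl ⟨h1, h5⟩
        · exact absurd h4 h2
        · exact Or.inr ⟨h1, h5, trans1 y y.2 z z.2 w w.2 h1 h2 h5 h3 h6⟩ }
  obtain ⟨e, he⟩ := sto_enum r hr N (by simpa using hcard)
  refine ⟨e, fun i j k hij hjk => ?_⟩
  have a1 := he _ _ hij
  have a2 := he _ _ hjk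
  have a3 := he _ _ (hij.trans hjk)
  have n1 : (e i).1 ≠ (e j).1 := fun h => hij.ne (e.injective (Subtype.ext h))
  have n2 : (e j).1 ≠ (e k).1 := fun h => hjk.ne (e.injective (Subtype.ext h))
  have n3 : (e i).1 ≠ (e k).1 := fun h => (hij.trans hjk).ne (e.injective (Subtype.ext h))
  show 0 < ori (e i).1 (e j).1 (e k).1
  rcases a2 with ⟨h4, h5⟩ | ⟨h4, h5, h6⟩
  · rcases a1 with ⟨h1, h2⟩ | ⟨h1, h2, h3⟩ <;> exact absurd h4 h2
  rcases a1 with ⟨h1, h2⟩ | ⟨h1, h2, h3⟩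
  · rw [h1]; exact h6
  rcases a3 with ⟨h7, h8⟩ | ⟨h7, h8, h9⟩
  · exact absurd h7 h1
  by_contra hcon
  have h10 := lt_of_le_of_ne (not_lt.1 hcon) (hne _ (e i).2 _ (e j).2 _ (e k).2 n1 n2 n3)
  refine hin _ (e j).2 o ho _ (e i).2 _ (e k).2 (Ne.symm h2) n1 n2.symm ?_ h6 h3
  have : ori (e j).1 (e i).1 (e k).1 = - ori (e i).1 (e j).1 (e k).1 := by simp only [ori]; ring
  linarith

/-- Interleaving of two chords. -/
def Cr {α : Type} [LT α] (a b c d : α) : Prop := (a < c ∧ c < b ∧ b < d) ∨ (c < a ∧ a < d ∧ d < b)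

lemma chord_real (k : ℕ) : ∀ (V : Type) [Fintype V] (G : SimpleGraph V), Fintype.card V = k →
    G.IsTree → ∃ f g : V → ℝ, (∀ v, f v < g v) ∧ Function.Injective (Sum.elim f g) ∧
      ∀ u v, u ≠ v → (Cr (f u) (g u) (f v) (g v) ↔ G.Adj u v) := by
  classical
  induction k with
  | zero =>
    intro V _ G hc hG
    have := hG.1.nonempty
    simp at hc
  | succ k ih =>
    intro V _ G hc hG
    rcases subsingleton_or_nontrivial V with hV | hV
    · refine ⟨fun _ => 0, fun _ => 1, by simp, ?_, fun u v h => absurd (Subsingleton.elim u v) h⟩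
      rintro (a | a) (b | b) h
      · rw [Subsingleton.elim a b]
      · simp at h
      · simp at h
      · rw [Subsingleton.elim a b]
    obtain ⟨v, hv⟩ := hG.exists_vert_degree_one_of_nontrivial
    have hG' : (G.induce {v}ᶜ).IsTree :=
      ⟨hG.1.induce_compl_singleton_of_degree_eq_one hv, hG.2.induce _⟩
    obtain ⟨u, huv, huniq⟩ := SimpleGraph.degree_eq_one_iff_existsUnique_adj.mp hv
    have hadj : ∀ w, G.Adj v w ↔ w = u := fun w => ⟨fun h => huniq w h, fun h => h ▸ huv⟩
    have huv' : u ≠ v := huv.ne'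
    obtain ⟨f₀, g₀, hfg₀, hinj₀, hcr₀⟩ := ih ({v}ᶜ : Set V) (G.induce {v}ᶜ)
      (by rw [Fintype.card_compl_set]; simp [hc]) hG'
    let F : V → ℝ := fun w => if h : w = v then 0 else f₀ ⟨w, h⟩
    let K : V → ℝ := fun w => if h : w = v then 0 else g₀ ⟨w, h⟩
    have hF : ∀ w (h : w ≠ v), F w = f₀ ⟨w, h⟩ := fun w h => by simp [F, h]
    have hK : ∀ w (h : w ≠ v), K w = g₀ ⟨w, h⟩ := fun w h => by simp [K, h]
    have hFK : ∀ w, w ≠ v → F w < K w := fun w h => by rw [hF w h, hK w h]; exact hfg₀ _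
    have hFF : ∀ w w', w ≠ v → w' ≠ v → F w = F w' → w = w' := by
      intro w w' h h' he
      rw [hF w h, hF w' h'] at he
      exact Subtype.ext_iff.1 (Sum.inl_injective (@hinj₀ (Sum.inl ⟨w, h⟩) (Sum.inl ⟨w', h'⟩) he))
    have hKK : ∀ w w', w ≠ v → w' ≠ v → K w = K w' → w = w' := by
      intro w w' h h' he
      rw [hK w h, hK w' h'] at he
      exact Subtype.ext_iff.1 (Sum.inr_injective (@hinj₀ (Sum.inr ⟨w, h⟩) (Sum.inr ⟨w', h'⟩) he))
    have hFK' : ∀ w w', w ≠ v → w' ≠ v → F w ≠ K w' := by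
      intro w w' h h' he
      rw [hF w h, hK w' h'] at he
      simpa using @hinj₀ (Sum.inl ⟨w, h⟩) (Sum.inr ⟨w', h'⟩) he
    have hCR : ∀ w w', w ≠ v → w' ≠ v → w ≠ w' →
        (Cr (F w) (K w) (F w') (K w') ↔ G.Adj w w') := by
      intro w w' h h' hne
      rw [hF w h, hF w' h', hK w h, hK w' h', hcr₀ _ _ (fun hh => hne (Subtype.ext_iff.1 hh))]
      simp
    clear_value F K
    obtain ⟨ε, hε, hεF, hεK⟩ : ∃ ε : ℝ, 0 < ε ∧ (∀ w, w ≠ v → w ≠ u → ε < |F w - F u|) ∧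
        (∀ w, w ≠ v → ε < |K w - F u|) := by
      have : ∀ᶠ ε in nhdsWithin (0 : ℝ) (Set.Ioi 0), 0 < ε ∧
          (∀ w, w ≠ v → w ≠ u → ε < |F w - F u|) ∧ (∀ w, w ≠ v → ε < |K w - F u|) := by
        refine (eventually_mem_nhdsWithin).and (Filter.Eventually.and ?_ ?_)
        · rw [Filter.eventually_all]
          intro w
          by_cases h : w ≠ v ∧ w ≠ u
          · have : 0 < |F w - F u| := abs_pos.2 (sub_ne_zero.2 fun he => h.2 (hFF w u h.1 huv' he))
            filter_upwards [nhdsWithin_le_nhds (Iio_mem_nhds this)] with ε hε _ _ using hε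
          · exact Filter.Eventually.of_forall fun ε h1 h2 => absurd ⟨h1, h2⟩ h
        · rw [Filter.eventually_all]
          intro w
          by_cases h : w ≠ v
          · have : 0 < |K w - F u| := abs_pos.2 (sub_ne_zero.2 fun he => hFK' u w huv' h he.symm)
            filter_upwards [nhdsWithin_le_nhds (Iio_mem_nhds this)] with ε hε _ using hε
          · exact Filter.Eventually.of_forall fun ε h1 => absurd h1 h
      exact this.exists
    have hεF' : ∀ w, w ≠ v → w ≠ u → F w < F u - ε ∨ F u + ε < F w := by
      intro w h1 h2
      rcases lt_abs.1 (hεF w h1 h2) with h | h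
      · right; linarith
      · left; linarith
    have hεK' : ∀ w, w ≠ v → K w < F u - ε ∨ F u + ε < K w := by
      intro w h1
      rcases lt_abs.1 (hεK w h1) with h | h
      · right; linarith
      · left; linarith
    have hεF'' : ∀ w, w ≠ v → F w ≠ F u - ε ∧ F w ≠ F u + ε := by
      intro w h1
      by_cases h2 : w = u
      · subst h2; constructor <;> intro h <;> linarith
      · rcases hεF' w h1 h2 with h | h <;> constructor <;> intro h <;> linarith
    have hεK'' : ∀ w, w ≠ v → K w ≠ F u - ε ∧ K w ≠ F u + ε := by
      intro w h1
      rcases hεK' w h1 with h | h <;> constructor <;> intro h <;> linarith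
    have hKu : F u + ε < K u := by
      have := hFK u huv'
      rcases hεK' u huv' with h | h <;> linarith
    have hmain : ∀ w, w ≠ v → (Cr (F u - ε) (F u + ε) (F w) (K w) ↔ w = u) := by
      intro w hw
      constructor
      · intro h
        by_contra h2
        rcases h with ⟨h3, h4, h5⟩ | ⟨h3, h4, h5⟩
        · rcases hεF' w hw h2 with h | h <;> linarith
        · rcases hεK' w hw with h | h <;> linarith
      · rintro rfl
        exact Or.inl ⟨by linarith, by linarith, hKu⟩
    have hsymm : ∀ a b c d : ℝ, Cr a b c d ↔ Cr c d a b := fun a b c d => or_comm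
    refine ⟨fun w => if w = v then F u - ε else F w, fun w => if w = v then F u + ε else K w,
      ?_, ?_, ?_⟩
    · intro w
      by_cases hw : w = v
      · simp only [hw, if_true]; linarith
      · simp only [hw, if_false]; exact hFK w hw
    · rintro (a | a) (b | b) h <;> simp only [Sum.elim_inl, Sum.elim_inr] at h <;>
        by_cases ha : a = v <;> by_cases hb : b = v <;>
        simp only [ha, hb, if_true, if_false] at h ⊢
      · exact absurd h.symm (hεF'' b hb).1
      · exact absurd h (hεF'' a ha).1
      · rw [hFF a b ha hb h]
      · linarith
      · exact absurd h.symm (hεK'' b hb).1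
      · exact absurd h (hεF'' a ha).2
      · exact absurd h (hFK' a b ha hb)
      · linarith
      · exact absurd h.symm (hεF'' b hb).2
      · exact absurd h (hεK'' a ha).1
      · exact absurd h.symm (hFK' b a hb ha)
      · exact absurd h.symm (hεK'' b hb).2
      · exact absurd h (hεK'' a ha).2
      · rw [hKK a b ha hb h]
    · intro a b hab
      by_cases ha : a = v <;> by_cases hb : b = v <;> simp only [ha, hb, if_true, if_false]
      · exact absurd (ha.trans hb.symm) hab
      · rw [hmain b hb, hadj]
      · rw [hsymm, hmain a ha, G.adj_comm, hadj]
      · exact hCR a b ha hb hab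

lemma chord_fin (n : ℕ) (G : SimpleGraph (Fin n)) (hG : G.IsTree) :
    ∃ f g : Fin n → Fin (2 * n), (∀ v, f v < g v) ∧ Function.Bijective (Sum.elim f g) ∧
      ∀ u v, u ≠ v → (Cr (f u) (g u) (f v) (g v) ↔ G.Adj u v) := by
  classical
  obtain ⟨f, g, hfg, hinj, hcr⟩ := chord_real n (Fin n) G (by simp) hG
  let A : Finset ℝ := Finset.univ.image (Sum.elim f g)
  have hA : A.card = 2 * n := by
    rw [Finset.card_image_of_injective _ hinj]; simp; omega
  let e := A.orderIsoOfFin hA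
  have mem : ∀ x, Sum.elim f g x ∈ A := fun x => Finset.mem_image_of_mem _ (Finset.mem_univ x)
  let φ : Fin n ⊕ Fin n → Fin (2 * n) := fun x => e.symm ⟨Sum.elim f g x, mem x⟩
  have hφ : ∀ x y, φ x < φ y ↔ Sum.elim f g x < Sum.elim f g y := by
    intro x y
    simp only [φ, OrderIso.lt_iff_lt, Subtype.mk_lt_mk]
  have hφi : Function.Injective φ := by
    intro x y h
    have := e.symm.injective h
    exact hinj (Subtype.ext_iff.1 this)
  refine ⟨fun i => φ (Sum.inl i), fun i => φ (Sum.inr i), fun v => (hφ _ _).2 (hfg v), ?_, ?_⟩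
  · have : (Sum.elim (fun i => φ (Sum.inl i)) fun i => φ (Sum.inr i)) = φ := by
      ext x; rcases x with x | x <;> rfl
    rw [this, Fintype.bijective_iff_injective_and_card]
    exact ⟨hφi, by simp; omega⟩
  · intro u v huv
    rw [← hcr u v huv]
    simp only [Cr, hφ, Sum.elim_inl, Sum.elim_inr]

lemma seg_iff {N : ℕ} (q : Fin N → Fin 2 → ℝ)
    (hq : ∀ i j k, i < j → j < k → 0 < ori (q i) (q j) (q k)) (a b c d : Fin N)
    (hab : a < b) (hcd : c < d) (hac : a ≠ c) (had : a ≠ d) (hbc : b ≠ c) (hbd : b ≠ d) :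
    (segment ℝ (q a) (q b) ∩ segment ℝ (q c) (q d)).Nonempty ↔ Cr a b c d := by
  have main : ∀ a b c d : Fin N, a < b → c < d → a < c → b ≠ c → b ≠ d →
      ((segment ℝ (q a) (q b) ∩ segment ℝ (q c) (q d)).Nonempty ↔ Cr a b c d) := by
    intro a b c d hab hcd hac hbc hbd
    rcases lt_or_gt_of_ne hbc with h | h
    · refine iff_of_false (seg_disj _ _ _ _ (mul_pos (hq _ _ _ hab h)
        (hq _ _ _ hab (h.trans hcd)))) ?_
      rintro (⟨_, h1, _⟩ | ⟨h1, _⟩)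
      · exact lt_asymm h h1
      · exact lt_asymm hac h1
    rcases lt_or_gt_of_ne hbd with h' | h'
    · exact iff_of_true (seg_cross _ _ _ _ (hq _ _ _ hac h) (hq _ _ _ hab h')
        (hq _ _ _ hac hcd) (hq _ _ _ h h')) (Or.inl ⟨hac, h, h'⟩)
    · refine iff_of_false (seg_disj _ _ _ _ (mul_pos_of_neg_of_neg ?_ ?_)) ?_
      · rw [ori_swap]; linarith [hq _ _ _ hac h]
      · rw [ori_swap]; linarith [hq _ _ _ (hac.trans hcd) h']
      · rintro (⟨_, _, h1⟩ | ⟨h1, _⟩)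
        · exact lt_asymm h' h1
        · exact lt_asymm hac h1
  rcases lt_or_gt_of_ne hac with h | h
  · exact main a b c d hab hcd h hbc hbd
  · rw [Set.inter_comm, main c d a b hcd hab h had.symm hbd.symm]
    exact or_comm

end TreeChord

/-- Every tree `T` on `n` nodes is partition induced on any set `S` of `2n`
points in convex (and general) position in the plane: there is a partition of `S` into `n`
pairs whose convex hulls intersect exactly along the edges of `T`, with all triple
intersections empty. -/
theorem tree_partition_induced_convex_position
    {n : ℕ} (hn : 1 ≤ n)
    (T : SimpleGraph (Fin n)) (hT : T.IsTree)
    (S : Finset (Fin 2 → ℝ)) (hcard : S.card = 2 * n)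
    -- convex position
    (hconv : ∀ x ∈ S, x ∉ convexHull ℝ ((S : Set (Fin 2 → ℝ)) \ {x}))
    -- general position: no three points collinear
    (hgen : ∀ x ∈ S, ∀ y ∈ S, ∀ z ∈ S, x ≠ y → y ≠ z → x ≠ z →
      ¬ Collinear ℝ ({x, y, z} : Set (Fin 2 → ℝ))) :
    ∃ P : Fin n → Finset (Fin 2 → ℝ),
      (∀ i, (P i).card = 2) ∧
      (∀ i j, i ≠ j → Disjoint (P i) (P j)) ∧
      S = Finset.univ.biUnion P ∧
      (∀ i j, i ≠ j →
        ((convexHull ℝ (P i : Set (Fin 2 → ℝ)) ∩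
          convexHull ℝ (P j : Set (Fin 2 → ℝ))).Nonempty ↔ T.Adj i j)) ∧
      (∀ i j k, i ≠ j → j ≠ k → i ≠ k →
        convexHull ℝ (P i : Set (Fin 2 → ℝ)) ∩
          convexHull ℝ (P j : Set (Fin 2 → ℝ)) ∩
          convexHull ℝ (P k : Set (Fin 2 → ℝ)) = ∅) := by
  classical
  obtain ⟨q, hq⟩ := TreeChord.exists_enum (2 * n) S hcard hconv hgen
  obtain ⟨f, g, hfg, hbij, hcr⟩ := TreeChord.chord_fin n T hT
  have hqi : Function.Injective (fun i => (q i : Fin 2 → ℝ)) :=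
    Subtype.val_injective.comp q.injective
  have hff : ∀ i j, i ≠ j → f i ≠ f j := fun i j h he =>
    h (by simpa using @hbij.1 (Sum.inl i) (Sum.inl j) he)
  have hgg : ∀ i j, i ≠ j → g i ≠ g j := fun i j h he =>
    h (by simpa using @hbij.1 (Sum.inr i) (Sum.inr j) he)
  have hfg' : ∀ i j, f i ≠ g j := fun i j he => by
    simpa using @hbij.1 (Sum.inl i) (Sum.inr j) he
  have hiff : ∀ i j, i ≠ j → ((convexHull ℝ
      (({(q (f i) : Fin 2 → ℝ), (q (g i) : Fin 2 → ℝ)} : Finset (Fin 2 → ℝ)) : Set (Fin 2 → ℝ)) ∩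
      convexHull ℝ (({(q (f j) : Fin 2 → ℝ), (q (g j) : Fin 2 → ℝ)} : Finset (Fin 2 → ℝ)) :
        Set (Fin 2 → ℝ))).Nonempty ↔ T.Adj i j) := by
    intro i j hij
    rw [← hcr i j hij, Finset.coe_pair, Finset.coe_pair, convexHull_pair, convexHull_pair]
    exact TreeChord.seg_iff (fun i => (q i : Fin 2 → ℝ)) hq _ _ _ _ (hfg i) (hfg j) (hff i j hij)
      (hfg' i j) (hfg' j i).symm (hgg i j hij)
  refine ⟨fun i => {(q (f i) : Fin 2 → ℝ), (q (g i) : Fin 2 → ℝ)}, ?_, ?_, ?_, hiff, ?_⟩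
  · intro i
    exact Finset.card_pair fun h => hfg' i i (hqi h)
  · intro i j hij
    rw [Finset.disjoint_left]
    intro x hx hx'
    simp only [Finset.mem_insert, Finset.mem_singleton] at hx hx'
    rcases hx with rfl | rfl <;> rcases hx' with h | h
    · exact hff i j hij (hqi h)
    · exact hfg' i j (hqi h)
    · exact hfg' j i (hqi h).symm
    · exact hgg i j hij (hqi h)
  · ext x
    simp only [Finset.mem_biUnion, Finset.mem_univ, true_and, Finset.mem_insert,
      Finset.mem_singleton]
    constructor
    · intro hx
      obtain ⟨y, hy⟩ := hbij.2 (q.symm ⟨x, hx⟩)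
      have hx' : x = (q (Sum.elim f g y) : Fin 2 → ℝ) := by rw [hy]; simp
      rcases y with y | y
      · exact ⟨y, Or.inl hx'⟩
      · exact ⟨y, Or.inr hx'⟩
    · rintro ⟨i, rfl | rfl⟩ <;> exact Subtype.coe_prop _
  · intro i j k hij hjk hik
    rw [Set.eq_empty_iff_forall_notMem]
    rintro x ⟨⟨h1, h2⟩, h3⟩
    have a1 := (hiff i j hij).1 ⟨x, h1, h2⟩
    have a2 := (hiff j k hjk).1 ⟨x, h2, h3⟩
    have a3 := (hiff i k hik).1 ⟨x, h1, h3⟩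
    exact hT.2.cliqueFree le_rfl {i, j, k} (SimpleGraph.is3Clique_triple_iff.2 ⟨a1, a3, a2⟩)
end

section
/- For every n ≥ 4 and d ≥ 2, every set of at least nd + n + 4d points in general position in ℝ^d admits a partition into n parts S_1,…,S_n such that conv(S_i) ∩ conv(S_j) ≠ ∅ if and only if |i − j| = 1 or {i,j} = {1,n}; i.e., the nerve of the partition is the n-cycle C_n. -/
namespace CyclePart

/-- Radon step without a prescribed shared point. -/
lemma radon_first {d : ℕ} (σ : Finset (Fin d → ℝ)) (hσ : d + 2 ≤ σ.card) :
    ∃ B ⊆ σ, (convexHull ℝ (B : Set (Fin d → ℝ)) ∩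
      convexHull ℝ ((σ \ B : Finset (Fin d → ℝ)) : Set (Fin d → ℝ))).Nonempty := by
  classical
  have hni : ¬ AffineIndependent ℝ (fun x : σ => (x : Fin d → ℝ)) := by
    intro h
    have h1 := h.card_le_finrank_succ
    have h2 := Submodule.finrank_le (vectorSpan ℝ (Set.range (fun x : σ => (x : Fin d → ℝ))))
    simp at h1 h2
    omega
  obtain ⟨I, hI⟩ := Convex.radon_partition hni
  refine ⟨σ.filter (fun x => x ∈ (fun x : σ => (x : Fin d → ℝ)) '' I), Finset.filter_subset _ _, ?_⟩
  refine hI.mono (Set.inter_subset_inter (convexHull_mono ?_) (convexHull_mono ?_))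
  · rintro _ ⟨x, hx, rfl⟩
    simp [hx]
  · rintro _ ⟨x, hx, rfl⟩
    simpa using hx

/-- Radon step with a nonempty set `C` from which one point is shared. -/
lemma radon_step {d : ℕ} (σ C : Finset (Fin d → ℝ)) (hσ : d + 1 ≤ σ.card) (hC : C.Nonempty)
    (hdis : Disjoint C σ) :
    ∃ B ⊆ σ, (convexHull ℝ (B : Set (Fin d → ℝ)) ∩
      convexHull ℝ ((σ \ B ∪ C : Finset (Fin d → ℝ)) : Set (Fin d → ℝ))).Nonempty := by
  classical
  obtain ⟨p, hp⟩ := hC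
  have hpσ : p ∉ σ := Finset.disjoint_left.1 hdis hp
  obtain ⟨B, hB, hne⟩ := radon_first (insert p σ) (by rw [Finset.card_insert_of_notMem hpσ]; omega)
  by_cases hpB : p ∈ B
  · refine ⟨insert p σ \ B, ?_, ?_⟩
    · grind
    · rw [Set.inter_comm] at hne
      refine hne.mono (Set.inter_subset_inter_right _ (convexHull_mono ?_))
      intro x hx
      simp only [Finset.mem_coe] at hx ⊢
      grind
  · refine ⟨B, by grind, ?_⟩
    refine hne.mono (Set.inter_subset_inter_right _ (convexHull_mono ?_))
    intro x hx
    simp only [Finset.mem_coe] at hx ⊢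
    grind

/-- Cyclic predecessor. -/
def prv (n i : ℕ) : ℕ := if i = 0 then n - 1 else i - 1

/-- The chain of Radon partitions. -/
lemma chain {d n : ℕ} (σ : ℕ → Finset (Fin d → ℝ))
    (hdis : ∀ i j, i ≠ j → Disjoint (σ i) (σ j))
    (h0 : d + 2 ≤ (σ 0).card) (hσ : ∀ i < n, d + 1 ≤ (σ i).card) :
    ∃ B : ℕ → Finset (Fin d → ℝ), (∀ i, B i ⊆ σ i) ∧
      ∀ i < n, (convexHull ℝ (B i : Set (Fin d → ℝ)) ∩
        convexHull ℝ ((σ i \ B i ∪ B (prv n i) : Finset (Fin d → ℝ)) :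
          Set (Fin d → ℝ))).Nonempty := by
  classical
  have step : ∀ (i : ℕ) (C : Finset (Fin d → ℝ)), ∃ B ⊆ σ i,
      (i < n → C.Nonempty → Disjoint C (σ i) → (convexHull ℝ (B : Set (Fin d → ℝ)) ∩
      convexHull ℝ ((σ i \ B ∪ C : Finset (Fin d → ℝ)) : Set (Fin d → ℝ))).Nonempty) := by
    intro i C
    by_cases h : i < n ∧ C.Nonempty ∧ Disjoint C (σ i)
    · obtain ⟨B, hB, hne⟩ := radon_step (σ i) C (hσ i h.1) h.2.1 h.2.2
      exact ⟨B, hB, fun _ _ _ => hne⟩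
    · exact ⟨∅, by simp, fun h1 h2 h3 => absurd ⟨h1, h2, h3⟩ h⟩
  choose next hnext1 hnext2 using step
  obtain ⟨B0, hB0, hne0⟩ := radon_first (σ 0) h0
  obtain ⟨B, hBz, hBs⟩ : ∃ B : ℕ → Finset (Fin d → ℝ), B 0 = B0 ∧
      ∀ i, B (i + 1) = next (i + 1) (B i) :=
    ⟨fun i => Nat.rec B0 (fun i Bi => next (i + 1) Bi) i, rfl, fun i => rfl⟩
  subst hBz
  have hBsub : ∀ i, B i ⊆ σ i := by
    intro i
    cases i with
    | zero => exact hB0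
    | succ i => rw [hBs]; exact hnext1 _ _
  have hz : (convexHull ℝ ((B 0 : Finset (Fin d → ℝ)) : Set (Fin d → ℝ)) ∩
        convexHull ℝ ((σ 0 \ B 0 ∪ B (prv n 0) : Finset (Fin d → ℝ)) :
          Set (Fin d → ℝ))).Nonempty := by
    refine hne0.mono (Set.inter_subset_inter_right _ (convexHull_mono ?_))
    intro x hx
    simp only [Finset.mem_coe] at hx ⊢
    exact Finset.mem_union_left _ hx
  refine ⟨B, hBsub, ?_⟩
  intro i
  induction i with
  | zero => intro _; exact hz
  | succ i ih =>
    intro hi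
    have hprev := ih (by omega)
    have hBne : (B i).Nonempty := by
      have := hprev.mono Set.inter_subset_left
      rw [convexHull_nonempty_iff] at this
      exact_mod_cast this
    have := hnext2 (i + 1) (B i) hi hBne
      ((hdis i (i + 1) (by omega)).mono_left (hBsub i))
    simpa [prv, hBs] using this

/-- From a cyclic sequence of blocks to the partition. -/
lemma partition_of_blocks {d n : ℕ} (hn : 4 ≤ n) (S : Finset (Fin d → ℝ))
    (blk : (Fin d → ℝ) → ℕ) (hblk : ∀ x ∈ S, blk x < n)
    (h0 : d + 2 ≤ (S.filter (fun x => blk x = 0)).card)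
    (hσ : ∀ i < n, d + 1 ≤ (S.filter (fun x => blk x = i)).card)
    (hsep : ∀ i j, i + 2 ≤ j → j < n → ¬ (i = 0 ∧ j = n - 1) →
      Disjoint (convexHull ℝ {x : Fin d → ℝ | x ∈ S ∧ (blk x = prv n i ∨ blk x = i)})
        (convexHull ℝ {x : Fin d → ℝ | x ∈ S ∧ (blk x = prv n j ∨ blk x = j)})) :
    ∃ P : Fin n → Finset (Fin d → ℝ),
      (∀ i, (P i).Nonempty) ∧
      (∀ i j, i ≠ j → Disjoint (P i) (P j)) ∧
      S = Finset.univ.biUnion P ∧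
      (∀ i j : Fin n, i ≠ j →
        ((convexHull ℝ (P i : Set (Fin d → ℝ)) ∩
          convexHull ℝ (P j : Set (Fin d → ℝ))).Nonempty ↔
          ((i : ℕ) + 1 = (j : ℕ) ∨ (j : ℕ) + 1 = (i : ℕ) ∨
            ((i : ℕ) = 0 ∧ (j : ℕ) = n - 1) ∨ ((j : ℕ) = 0 ∧ (i : ℕ) = n - 1)))) ∧
      (∀ i j k, i ≠ j → j ≠ k → i ≠ k →
        convexHull ℝ (P i : Set (Fin d → ℝ)) ∩
          convexHull ℝ (P j : Set (Fin d → ℝ)) ∩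
          convexHull ℝ (P k : Set (Fin d → ℝ)) = ∅) := by
  classical
  obtain ⟨B, hBs, hB⟩ := chain (n := n) (fun i => S.filter (fun x => blk x = i))
    (by
      intro i j hij
      rw [Finset.disjoint_left]
      intro x hx hy
      simp only [Finset.mem_filter] at hx hy
      exact hij (hx.2.symm.trans hy.2)) h0 hσ
  have hBmem : ∀ i x, x ∈ B i → x ∈ S ∧ blk x = i := by
    intro i x hx
    simpa using hBs i hx
  have hBne : ∀ i < n, (B i).Nonempty := by
    intro i hi
    have := (hB i hi).mono Set.inter_subset_left
    rw [convexHull_nonempty_iff] at this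
    exact_mod_cast this
  let Q : ℕ → Finset (Fin d → ℝ) := fun i => S.filter (fun x => blk x = i) \ B i ∪ B (prv n i)
  have hQ : ∀ i x, x ∈ Q i ↔ (x ∈ S ∧ blk x = i ∧ x ∉ B i) ∨ x ∈ B (prv n i) := by
    intro i x
    simp [Q, and_assoc]
  have hprv : ∀ i < n, prv n i < n := by
    intro i hi; unfold prv; split_ifs <;> omega
  have hadj : ∀ i j, i < n → j < n → prv n j = i →
      (convexHull ℝ (Q i : Set (Fin d → ℝ)) ∩ convexHull ℝ (Q j : Set (Fin d → ℝ))).Nonempty := by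
    intro i j hi hj hij
    have := hB i hi
    rw [Set.inter_comm] at this
    refine this.mono (Set.inter_subset_inter_right _ (convexHull_mono ?_))
    intro x hx
    simp only [Finset.mem_coe] at hx ⊢
    rw [hQ, hij]
    exact Or.inr hx
  have hQsub : ∀ i, (Q i : Set (Fin d → ℝ)) ⊆ {x | x ∈ S ∧ (blk x = prv n i ∨ blk x = i)} := by
    intro i x hx
    simp only [Finset.mem_coe] at hx
    rw [hQ] at hx
    rcases hx with h | h
    · exact ⟨h.1, Or.inr h.2.1⟩
    · exact ⟨(hBmem _ _ h).1, Or.inl (hBmem _ _ h).2⟩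
  have hnon : ∀ i j, i + 2 ≤ j → j < n → ¬ (i = 0 ∧ j = n - 1) →
      Disjoint (convexHull ℝ (Q i : Set (Fin d → ℝ))) (convexHull ℝ (Q j : Set (Fin d → ℝ))) :=
    fun i j h1 h2 h3 => (hsep i j h1 h2 h3).mono (convexHull_mono (hQsub i))
      (convexHull_mono (hQsub j))
  have hiff : ∀ i j : Fin n, i ≠ j →
        ((convexHull ℝ (Q i : Set (Fin d → ℝ)) ∩
          convexHull ℝ (Q j : Set (Fin d → ℝ))).Nonempty ↔
          ((i : ℕ) + 1 = (j : ℕ) ∨ (j : ℕ) + 1 = (i : ℕ) ∨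
            ((i : ℕ) = 0 ∧ (j : ℕ) = n - 1) ∨ ((j : ℕ) = 0 ∧ (i : ℕ) = n - 1))) := by
    intro i j hij
    have hij' : (i : ℕ) ≠ j := fun h => hij (Fin.ext h)
    have hi := i.2
    have hj := j.2
    constructor
    · intro h
      by_contra hcon
      rcases lt_or_gt_of_ne hij' with hlt | hlt
      · exact Set.not_disjoint_iff_nonempty_inter.2 h (hnon i j (by omega) hj (by omega))
      · rw [Set.inter_comm] at h
        exact Set.not_disjoint_iff_nonempty_inter.2 h (hnon j i (by omega) hi (by omega))
    · rintro (h | h | h | h)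
      · exact hadj i j hi hj (by unfold prv; split_ifs <;> omega)
      · rw [Set.inter_comm]; exact hadj j i hj hi (by unfold prv; split_ifs <;> omega)
      · rw [Set.inter_comm]; exact hadj j i hj hi (by unfold prv; split_ifs <;> omega)
      · exact hadj i j hi hj (by unfold prv; split_ifs <;> omega)
  refine ⟨fun i => Q i, ?_, ?_, ?_, hiff, ?_⟩
  · intro i
    obtain ⟨x, hx⟩ := hBne (prv n i) (hprv i i.2)
    exact ⟨x, (hQ _ _).2 (Or.inr hx)⟩
  · intro i j hij
    have hij' : (i : ℕ) ≠ j := fun h => hij (Fin.ext h)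
    have hi := i.2
    have hj := j.2
    rw [Finset.disjoint_left]
    intro x hx hy
    rw [hQ] at hx hy
    rcases hx with hx | hx <;> rcases hy with hy | hy
    · exact hij' (hx.2.1.symm.trans hy.2.1)
    · have := (hBmem _ _ hy).2
      rw [← this, hx.2.1] at hy
      exact hx.2.2 hy
    · have := (hBmem _ _ hx).2
      rw [← this, hy.2.1] at hx
      exact hy.2.2 hx
    · have h1 := (hBmem _ _ hy).2
      have h2 := (hBmem _ _ hx).2
      rw [h1] at h2
      unfold prv at h2
      split_ifs at h2 <;> omega
  · ext x
    simp only [Finset.mem_biUnion, Finset.mem_univ, true_and]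
    constructor
    · intro hx
      by_cases hxB : x ∈ B (blk x)
      · have hlt := hblk x hx
        by_cases hl : blk x = n - 1
        · refine ⟨⟨0, by omega⟩, (hQ _ _).2 (Or.inr ?_)⟩
          have : prv n 0 = blk x := by simp [prv, hl]
          simpa [this] using hxB
        · refine ⟨⟨blk x + 1, by omega⟩, (hQ _ _).2 (Or.inr ?_)⟩
          have : prv n (blk x + 1) = blk x := by simp [prv]
          simpa [this] using hxB
      · exact ⟨⟨blk x, hblk x hx⟩, (hQ _ _).2 (Or.inl ⟨hx, rfl, hxB⟩)⟩
    · rintro ⟨i, hi⟩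
      exact (hQsub i hi).1
  · intro i j k hij hjk hik
    by_contra hcon
    obtain ⟨z, ⟨hz1, hz2⟩, hz3⟩ := Set.nonempty_iff_ne_empty.2 hcon
    have a1 := (hiff i j hij).1 ⟨z, hz1, hz2⟩
    have a2 := (hiff j k hjk).1 ⟨z, hz2, hz3⟩
    have a3 := (hiff i k hik).1 ⟨z, hz1, hz3⟩
    omega

/-- Lexicographic separation of finite sets. -/
lemma lex_sep {d : ℕ} (S : Finset (Fin d → ℝ)) (X Y : Set (Fin d → ℝ)) (hX : X ⊆ S) (hY : Y ⊆ S)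
    (φ ψ : (Fin d → ℝ) →ₗ[ℝ] ℝ) (a b : ℝ)
    (h1 : ∀ x ∈ X, φ x < a ∨ (φ x = a ∧ ψ x < b))
    (h2 : ∀ x ∈ Y, a < φ x ∨ (φ x = a ∧ b ≤ ψ x)) :
    Disjoint (convexHull ℝ X) (convexHull ℝ Y) := by
  classical
  have key : ∀ x ∈ S, ∀ᶠ ε : ℝ in nhdsWithin 0 (Set.Ioi 0),
      (φ x < a → φ x + ε * ψ x < a + ε * b) ∧ (a < φ x → a + ε * b < φ x + ε * ψ x) := by
    intro x _
    have c1 : Filter.Tendsto (fun ε : ℝ => φ x + ε * ψ x) (nhdsWithin 0 (Set.Ioi 0)) (nhds (φ x)) := by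
      have : Continuous (fun ε : ℝ => φ x + ε * ψ x) := by fun_prop
      have := this.tendsto 0
      simp only [zero_mul, add_zero] at this
      exact this.mono_left nhdsWithin_le_nhds
    have c2 : Filter.Tendsto (fun ε : ℝ => a + ε * b) (nhdsWithin 0 (Set.Ioi 0)) (nhds a) := by
      have : Continuous (fun ε : ℝ => a + ε * b) := by fun_prop
      have := this.tendsto 0
      simp only [zero_mul, add_zero] at this
      exact this.mono_left nhdsWithin_le_nhds
    rcases lt_trichotomy (φ x) a with h | h | h
    · filter_upwards [c1.eventually_lt c2 h] with ε hε
      exact ⟨fun _ => hε, fun h' => absurd h (not_lt.2 h'.le)⟩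
    · exact Filter.Eventually.of_forall fun ε => ⟨fun h' => absurd h' (by simp [h]),
        fun h' => absurd h' (by simp [h])⟩
    · filter_upwards [c2.eventually_lt c1 h] with ε hε
      exact ⟨fun h' => absurd h (not_lt.2 h'.le), fun _ => hε⟩
  have key2 := (Filter.eventually_all_finset S).2 key
  obtain ⟨ε, hε, hpos⟩ := (key2.and self_mem_nhdsWithin).exists
  replace hpos : 0 < ε := hpos
  have lin : IsLinearMap ℝ (fun x : Fin d → ℝ => φ x + ε * ψ x) :=
    (φ + ε • ψ).isLinear
  have k1 : convexHull ℝ X ⊆ {x | φ x + ε * ψ x < a + ε * b} := by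
    refine convexHull_min ?_ (convex_halfSpace_lt lin _)
    intro x hx
    rcases h1 x hx with h | ⟨h, h'⟩
    · exact (hε x (hX hx)).1 h
    · simp only [Set.mem_ofPred_eq]; nlinarith
  have k2 : convexHull ℝ Y ⊆ {x | a + ε * b ≤ φ x + ε * ψ x} := by
    refine convexHull_min ?_ (convex_halfSpace_ge lin _)
    intro x hx
    rcases h2 x hx with h | ⟨h, h'⟩
    · exact ((hε x (hY hx)).2 h).le
    · simp only [Set.mem_ofPred_eq]; nlinarith
  rw [Set.disjoint_left]
  intro z hz1 hz2
  have e1 : φ z + ε * ψ z < a + ε * b := k1 hz1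
  have e2 : a + ε * b ≤ φ z + ε * ψ z := k2 hz2
  exact absurd e1 (not_lt.2 e2)

/-- A hyperplane contains at most `d` points. -/
lemma ties {d : ℕ} (S : Finset (Fin d → ℝ))
    (hgen : ∀ W : Finset (Fin d → ℝ), W ⊆ S → W.card = d + 1 →
      AffineIndependent ℝ (fun x : W => (x : Fin d → ℝ)))
    (φ : (Fin d → ℝ) →ₗ[ℝ] ℝ) (hφ : φ ≠ 0) (t : ℝ) :
    (S.filter (fun x => φ x = t)).card ≤ d := by
  classical
  by_contra hcon
  push Not at hcon
  obtain ⟨W, hW, hWc⟩ := Finset.exists_subset_card_eq (Nat.succ_le_of_lt hcon)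
  have hai := hgen W (hW.trans (Finset.filter_subset _ _)) hWc
  have htop : affineSpan ℝ (Set.range (fun x : W => (x : Fin d → ℝ))) = ⊤ := by
    rw [hai.affineSpan_eq_top_iff_card_eq_finrank_add_one]
    simp [hWc]
  have hsub : affineSpan ℝ (Set.range (fun x : W => (x : Fin d → ℝ))) ≤
      (AffineSubspace.mk' t (⊥ : Submodule ℝ ℝ)).comap φ.toAffineMap := by
    rw [affineSpan_le]
    rintro _ ⟨x, rfl⟩
    have := hW x.2
    simp only [Finset.mem_filter] at this
    simp [this.2]
  have hall : ∀ x, φ x = t := by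
    intro x
    have : x ∈ affineSpan ℝ (Set.range (fun x : W => (x : Fin d → ℝ))) := by rw [htop]; trivial
    have := hsub this
    simpa [sub_eq_zero] using this
  apply hφ
  have ht : t = 0 := by rw [← hall 0, map_zero]
  refine LinearMap.ext fun x => ?_
  rw [hall x, ht]
  rfl

/-- Order statistics. -/
lemma order_stat {α : Type*} (T : Finset α) (f : α → ℝ) (j : ℕ) (hj : 1 ≤ j) (hjT : j ≤ T.card) :
    ∃ a : ℝ, j ≤ (T.filter (fun x => f x ≤ a)).card ∧
      T.card + 1 - j ≤ (T.filter (fun x => a ≤ f x)).card := by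
  classical
  have hTne : T.Nonempty := Finset.card_pos.1 (by omega)
  let G := T.filter (fun x => j ≤ (T.filter (fun y => f y ≤ f x)).card)
  have hG : G.Nonempty := by
    obtain ⟨m, hm, hmax⟩ := Finset.exists_max_image T f hTne
    refine ⟨m, Finset.mem_filter.2 ⟨hm, ?_⟩⟩
    rwa [Finset.filter_true_of_mem (fun y hy => hmax y hy)]
  obtain ⟨m, hm, hmin⟩ := Finset.exists_min_image G f hG
  have hmT := Finset.mem_filter.1 hm
  refine ⟨f m, hmT.2, ?_⟩
  have hlt : (T.filter (fun x => f x < f m)).card < j := by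
    by_contra hcon
    push Not at hcon
    have hne : (T.filter (fun x => f x < f m)).Nonempty := Finset.card_pos.1 (by omega)
    obtain ⟨p, hp, hpmax⟩ := Finset.exists_max_image _ f hne
    have hpT := Finset.mem_filter.1 hp
    have : p ∈ G := by
      refine Finset.mem_filter.2 ⟨hpT.1, hcon.trans (Finset.card_le_card ?_)⟩
      intro x hx
      exact Finset.mem_filter.2 ⟨(Finset.mem_filter.1 hx).1, hpmax x hx⟩
    exact absurd hpT.2 (not_lt.2 (hmin p this))
  have hsum := Finset.card_filter_add_card_filter_not (s := T) (fun x => f x < f m)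
  simp only [not_lt] at hsum
  omega

/-- Discrete ham-sandwich by connectedness of the line. -/
lemma sandwich {α : Type*} (L U : Finset α) (g h : α → ℝ) (hLU : ∀ x ∈ L, ∀ y ∈ U, g x < g y)
    (j k : ℕ) (hj : 1 ≤ j) (hjL : j ≤ L.card) (hk : 1 ≤ k) (hkU : k ≤ U.card) :
    ∃ s t : ℝ, j ≤ (L.filter (fun x => h x - s * g x ≤ t)).card ∧
      L.card + 1 - j ≤ (L.filter (fun x => t ≤ h x - s * g x)).card ∧
      k ≤ (U.filter (fun x => h x - s * g x ≤ t)).card ∧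
      U.card + 1 - k ≤ (U.filter (fun x => t ≤ h x - s * g x)).card := by
  classical
  let f : ℝ → α → ℝ := fun s x => h x - s * g x
  have hfc : ∀ x, Continuous (fun s => f s x) := by intro x; simp only [f]; fun_prop
  let C1 : Set ℝ := ⋃ p ∈ (L.powersetCard j) ×ˢ (U.powersetCard (U.card + 1 - k)),
    {s | ∀ x ∈ p.1, ∀ y ∈ p.2, f s x ≤ f s y}
  let C2 : Set ℝ := ⋃ p ∈ (L.powersetCard (L.card + 1 - j)) ×ˢ (U.powersetCard k),
    {s | ∀ x ∈ p.1, ∀ y ∈ p.2, f s y ≤ f s x}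
  have mem1 : ∀ s, s ∈ C1 ↔ ∃ J K, (J ⊆ L ∧ J.card = j) ∧ (K ⊆ U ∧ K.card = U.card + 1 - k) ∧
      ∀ x ∈ J, ∀ y ∈ K, f s x ≤ f s y := by
    intro s
    simp [C1, Finset.mem_powersetCard, and_assoc]
  have mem2 : ∀ s, s ∈ C2 ↔ ∃ J K, (J ⊆ L ∧ J.card = L.card + 1 - j) ∧ (K ⊆ U ∧ K.card = k) ∧
      ∀ x ∈ J, ∀ y ∈ K, f s y ≤ f s x := by
    intro s
    simp [C2, Finset.mem_powersetCard, and_assoc]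
  have cl1 : IsClosed C1 := by
    refine Set.Finite.isClosed_biUnion (Finset.finite_toSet _) ?_
    intro p _
    simp only [Set.ofPred_forall]
    exact isClosed_iInter fun x => isClosed_iInter fun _ => isClosed_iInter fun y =>
      isClosed_iInter fun _ => isClosed_le (hfc x) (hfc y)
  have cl2 : IsClosed C2 := by
    refine Set.Finite.isClosed_biUnion (Finset.finite_toSet _) ?_
    intro p _
    simp only [Set.ofPred_forall]
    exact isClosed_iInter fun x => isClosed_iInter fun _ => isClosed_iInter fun y =>
      isClosed_iInter fun _ => isClosed_le (hfc y) (hfc x)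
  have cover : (Set.univ : Set ℝ) ⊆ C1 ∪ C2 := by
    intro s _
    obtain ⟨a, ha1, ha2⟩ := order_stat L (f s) j hj hjL
    obtain ⟨b, hb1, hb2⟩ := order_stat U (f s) k hk hkU
    rcases le_total a b with hab | hab
    · left
      rw [mem1]
      obtain ⟨J, hJ, hJc⟩ := Finset.exists_subset_card_eq ha1
      obtain ⟨K, hK, hKc⟩ := Finset.exists_subset_card_eq hb2
      refine ⟨J, K, ⟨hJ.trans (Finset.filter_subset _ _), hJc⟩,
        ⟨hK.trans (Finset.filter_subset _ _), hKc⟩, fun x hx y hy => ?_⟩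
      have h1 := (Finset.mem_filter.1 (hJ hx)).2
      have h2 := (Finset.mem_filter.1 (hK hy)).2
      linarith
    · right
      rw [mem2]
      obtain ⟨J, hJ, hJc⟩ := Finset.exists_subset_card_eq ha2
      obtain ⟨K, hK, hKc⟩ := Finset.exists_subset_card_eq hb1
      refine ⟨J, K, ⟨hJ.trans (Finset.filter_subset _ _), hJc⟩,
        ⟨hK.trans (Finset.filter_subset _ _), hKc⟩, fun x hx y hy => ?_⟩
      have h1 := (Finset.mem_filter.1 (hJ hx)).2
      have h2 := (Finset.mem_filter.1 (hK hy)).2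
      linarith
  have ne1 : C1.Nonempty := by
    obtain ⟨M, hM⟩ := ((L ×ˢ U).image (fun p => (h p.2 - h p.1) / (g p.2 - g p.1))).finite_toSet.bddBelow
    obtain ⟨J, hJ, hJc⟩ := Finset.exists_subset_card_eq hjL
    obtain ⟨K, hK, hKc⟩ := Finset.exists_subset_card_eq (show U.card + 1 - k ≤ U.card by omega)
    refine ⟨M, (mem1 M).2 ⟨J, K, ⟨hJ, hJc⟩, ⟨hK, hKc⟩, fun x hx y hy => ?_⟩⟩
    have hpos := hLU x (hJ hx) y (hK hy)
    have : M ≤ (h y - h x) / (g y - g x) := hM (by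
      simp only [Finset.coe_image, Set.mem_image, Finset.mem_coe, Finset.mem_product]
      exact ⟨(x, y), ⟨hJ hx, hK hy⟩, rfl⟩)
    rw [le_div_iff₀ (by linarith)] at this
    simp only [f]
    linarith
  have ne2 : C2.Nonempty := by
    obtain ⟨M, hM⟩ := ((L ×ˢ U).image (fun p => (h p.2 - h p.1) / (g p.2 - g p.1))).finite_toSet.bddAbove
    obtain ⟨J, hJ, hJc⟩ := Finset.exists_subset_card_eq (show L.card + 1 - j ≤ L.card by omega)
    obtain ⟨K, hK, hKc⟩ := Finset.exists_subset_card_eq hkU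
    refine ⟨M, (mem2 M).2 ⟨J, K, ⟨hJ, hJc⟩, ⟨hK, hKc⟩, fun x hx y hy => ?_⟩⟩
    have hpos := hLU x (hJ hx) y (hK hy)
    have : (h y - h x) / (g y - g x) ≤ M := hM (by
      simp only [Finset.coe_image, Set.mem_image, Finset.mem_coe, Finset.mem_product]
      exact ⟨(x, y), ⟨hJ hx, hK hy⟩, rfl⟩)
    rw [div_le_iff₀ (by linarith)] at this
    simp only [f]
    linarith
  obtain ⟨s, -, hs1, hs2⟩ := isPreconnected_closed_iff.1 (isPreconnected_univ (α := ℝ)) C1 C2 cl1 cl2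
    cover (by simpa using ne1) (by simpa using ne2)
  obtain ⟨J, K, ⟨hJ, hJc⟩, ⟨hK, hKc⟩, h1⟩ := (mem1 s).1 hs1
  obtain ⟨J', K', ⟨hJ', hJc'⟩, ⟨hK', hKc'⟩, h2⟩ := (mem2 s).1 hs2
  have inter : ∀ (T A B : Finset α), A ⊆ T → B ⊆ T → T.card < A.card + B.card →
      ∃ x, x ∈ A ∧ x ∈ B := by
    intro T A B hA hB hc
    have := Finset.card_union_add_card_inter A B
    have h3 := Finset.card_le_card (Finset.union_subset hA hB)
    obtain ⟨x, hx⟩ := Finset.card_pos.1 (show 0 < (A ∩ B).card by omega)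
    exact ⟨x, Finset.mem_inter.1 hx⟩
  obtain ⟨x0, hx0, hx0'⟩ := inter L J J' hJ hJ' (by omega)
  obtain ⟨y0, hy0, hy0'⟩ := inter U K K' hK hK' (by omega)
  have e : f s x0 = f s y0 := le_antisymm (h1 _ hx0 _ hy0) (h2 _ hx0' _ hy0')
  refine ⟨s, f s x0, ?_, ?_, ?_, ?_⟩
  · rw [← hJc]
    exact Finset.card_le_card fun x hx => Finset.mem_filter.2 ⟨hJ hx, e ▸ h1 x hx y0 hy0⟩
  · rw [← hJc']
    exact Finset.card_le_card fun x hx => Finset.mem_filter.2 ⟨hJ' hx, e ▸ h2 x hx y0 hy0'⟩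
  · rw [← hKc']
    exact Finset.card_le_card fun x hx => Finset.mem_filter.2 ⟨hK' hx, h2 x0 hx0' x hx⟩
  · rw [← hKc]
    exact Finset.card_le_card fun x hx => Finset.mem_filter.2 ⟨hK hx, h1 x0 hx0 x hx⟩

/-- Rank of an element in a finite set with respect to a key. -/
noncomputable def rk {α β : Type*} [LinearOrder β] (T : Finset α) (key : α → β) (x : α) : ℕ :=
  (T.filter (fun y => key y < key x)).card

lemma rk_mono {α β : Type*} [LinearOrder β] (T : Finset α) (key : α → β) {x y : α}
    (h : key x ≤ key y) : rk T key x ≤ rk T key y := by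
  unfold rk
  refine Finset.card_le_card fun z hz => ?_
  simp only [Finset.mem_filter] at hz ⊢
  exact ⟨hz.1, hz.2.trans_le h⟩

lemma rk_strict {α β : Type*} [LinearOrder β] (T : Finset α) (key : α → β) {x y : α}
    (hx : x ∈ T) (h : key x < key y) : rk T key x < rk T key y := by
  unfold rk
  refine Finset.card_lt_card ⟨fun z hz => ?_, fun hs => ?_⟩
  · simp only [Finset.mem_filter] at hz ⊢
    exact ⟨hz.1, hz.2.trans h⟩
  · have : x ∈ T.filter (fun z => key z < key y) := Finset.mem_filter.2 ⟨hx, h⟩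
    simpa using hs this

lemma rk_lt {α β : Type*} [LinearOrder β] (T : Finset α) (key : α → β) {x : α}
    (hx : x ∈ T) : rk T key x < T.card := by
  unfold rk
  refine Finset.card_lt_card ⟨Finset.filter_subset _ _, fun hs => ?_⟩
  simpa using hs hx

lemma rk_inj {α β : Type*} [LinearOrder β] (T : Finset α) (key : α → β)
    (hinj : Set.InjOn key T) : Set.InjOn (rk T key) T := by
  intro x hx y hy hxy
  rcases lt_trichotomy (key x) (key y) with h | h | h
  · exact absurd hxy (rk_strict T key hx h).ne
  · exact hinj hx hy h
  · exact absurd hxy (rk_strict T key hy h).ne'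

lemma rk_image {α β : Type*} [LinearOrder β] (T : Finset α) (key : α → β)
    (hinj : Set.InjOn key T) : T.image (rk T key) = Finset.range T.card := by
  classical
  refine Finset.eq_of_subset_of_card_le ?_ ?_
  · intro i hi
    obtain ⟨x, hx, rfl⟩ := Finset.mem_image.1 hi
    exact Finset.mem_range.2 (rk_lt T key hx)
  · rw [Finset.card_image_of_injOn (rk_inj T key hinj), Finset.card_range]

lemma rk_count {α β : Type*} [LinearOrder β] (T : Finset α) (key : α → β)
    (hinj : Set.InjOn key T) (a b : ℕ) (hb : b ≤ T.card) :
    (T.filter (fun x => a ≤ rk T key x ∧ rk T key x < b)).card = b - a := by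
  classical
  have : (T.filter (fun x => a ≤ rk T key x ∧ rk T key x < b)).image (rk T key) = Finset.Ico a b := by
    ext i
    simp only [Finset.mem_image, Finset.mem_filter, Finset.mem_Ico]
    constructor
    · rintro ⟨x, ⟨_, h⟩, rfl⟩; exact h
    · intro h
      have : i ∈ T.image (rk T key) := by
        rw [rk_image T key hinj]; exact Finset.mem_range.2 (by omega)
      obtain ⟨x, hx, rfl⟩ := Finset.mem_image.1 this
      exact ⟨x, ⟨hx, h⟩, rfl⟩
  rw [← Nat.card_Ico, ← this, Finset.card_image_of_injOn]
  exact (rk_inj T key hinj).mono (fun x hx => (Finset.mem_filter.1 hx).1)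

/-- Block index from the two functionals and the slab index. -/
noncomputable def bk (n : ℕ) (gx g0 fx t : ℝ) (q : ℕ) : ℕ :=
  if gx ≤ g0 then (if fx < t then 0 else n - 1)
  else if fx < t then 1 else 2 + min q (n - 4)

lemma bk_zero {n : ℕ} (hn : 4 ≤ n) (gx g0 fx t : ℝ) (q : ℕ) :
    bk n gx g0 fx t q = 0 ↔ gx ≤ g0 ∧ fx < t := by
  grind [bk]

lemma bk_last {n : ℕ} (hn : 4 ≤ n) (gx g0 fx t : ℝ) (q : ℕ) :
    bk n gx g0 fx t q = n - 1 ↔ gx ≤ g0 ∧ t ≤ fx := by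
  grind [bk]

lemma bk_one {n : ℕ} (hn : 4 ≤ n) (gx g0 fx t : ℝ) (q : ℕ) :
    bk n gx g0 fx t q = 1 ↔ g0 < gx ∧ fx < t := by
  grind [bk]

lemma bk_mid {n : ℕ} (hn : 4 ≤ n) (gx g0 fx t : ℝ) (q : ℕ) {i : ℕ} (h2 : 2 ≤ i)
    (hi : i ≤ n - 2) :
    bk n gx g0 fx t q = i ↔ g0 < gx ∧ t ≤ fx ∧ min q (n - 4) = i - 2 := by
  grind [bk]

set_option maxHeartbeats 1000000 in
/-- The geometric block decomposition. -/
lemma main {d n : ℕ} (hd : 2 ≤ d) (hn : 4 ≤ n)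
    (S : Finset (Fin d → ℝ)) (hcard : n * d + n + 4 * d ≤ S.card)
    (hgen : ∀ W : Finset (Fin d → ℝ), W ⊆ S → W.card = d + 1 →
      AffineIndependent ℝ (fun x : W => (x : Fin d → ℝ))) :
    ∃ blk : (Fin d → ℝ) → ℕ, (∀ x ∈ S, blk x < n) ∧
    (d + 2 ≤ (S.filter (fun x => blk x = 0)).card) ∧
    (∀ i < n, d + 1 ≤ (S.filter (fun x => blk x = i)).card) ∧
    (∀ i j, i + 2 ≤ j → j < n → ¬ (i = 0 ∧ j = n - 1) →
      Disjoint (convexHull ℝ {x : Fin d → ℝ | x ∈ S ∧ (blk x = prv n i ∨ blk x = i)})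
        (convexHull ℝ {x : Fin d → ℝ | x ∈ S ∧ (blk x = prv n j ∨ blk x = j)})) := by
  classical
  -- a generic functional
  obtain ⟨g, hg⟩ : ∃ g : (Fin d → ℝ) →ₗ[ℝ] ℝ, Set.InjOn g S := by
    obtain ⟨g, hg⟩ := Module.exists_dual_forall_apply_ne_zero (K := ℝ) (M := Fin d → ℝ)
      (ι := {p : S × S // (p.1 : Fin d → ℝ) ≠ p.2}) (fun p => (p.1.1 : Fin d → ℝ) - p.1.2)
      (fun p => sub_ne_zero.2 p.2)
    refine ⟨g, fun x hx y hy hxy => ?_⟩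
    by_contra hne
    apply hg ⟨(⟨x, hx⟩, ⟨y, hy⟩), hne⟩
    simp [hxy]
  -- a second functional
  obtain ⟨h, hh⟩ : ∃ h : (Fin d → ℝ) →ₗ[ℝ] ℝ, ∀ s : ℝ, h - s • g ≠ 0 := by
    by_contra hcon
    push Not at hcon
    let i0 : Fin d := ⟨0, by omega⟩
    let i1 : Fin d := ⟨1, by omega⟩
    have h01 : i0 ≠ i1 := by simp [i0, i1]
    obtain ⟨a, ha⟩ := hcon (LinearMap.proj i0)
    obtain ⟨b, hb⟩ := hcon (LinearMap.proj i1)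
    have a0 := LinearMap.congr_fun ha (Pi.single i0 1)
    have a1 := LinearMap.congr_fun ha (Pi.single i1 1)
    have b1 := LinearMap.congr_fun hb (Pi.single i1 1)
    simp only [LinearMap.sub_apply, LinearMap.smul_apply, LinearMap.proj_apply, smul_eq_mul,
      LinearMap.zero_apply, Pi.single_eq_same, Pi.single_eq_of_ne h01] at a0 a1 b1
    have hane : a ≠ 0 := by rintro rfl; simp at a0
    have : g (Pi.single i1 1) = 0 := by
      have : a * g (Pi.single i1 1) = 0 := by linarith
      exact (mul_eq_zero.1 this).resolve_left hane
    rw [this] at b1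
    simp at b1
  -- sizes
  have hN : 4 * d + 4 + 4 * d ≤ S.card := by nlinarith
  -- lower and upper part
  let L := S.filter (fun x => 0 ≤ rk S g x ∧ rk S g x < 3 * d + 2)
  have hLc : L.card = 3 * d + 2 := by
    have := rk_count S g hg 0 (3 * d + 2) (by omega)
    simpa [L] using this
  obtain ⟨m, hm, hmax⟩ := Finset.exists_max_image L g (Finset.card_pos.1 (by omega))
  set g0 : ℝ := g m with hg0
  have hmS : m ∈ S ∧ rk S g m < 3 * d + 2 := by simpa [L] using hm
  have hL : L = S.filter (fun x => g x ≤ g0) := by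
    ext x
    simp only [Finset.mem_filter]
    constructor
    · intro hx; exact ⟨(Finset.mem_filter.1 hx).1, hmax x hx⟩
    · rintro ⟨hx, hxg⟩
      exact Finset.mem_filter.2 ⟨hx, Nat.zero_le _, (rk_mono S g hxg).trans_lt hmS.2⟩
  let U := S.filter (fun x => g0 < g x)
  have hUc : L.card + U.card = S.card := by
    rw [hL]
    have := Finset.card_filter_add_card_filter_not (s := S) (fun x => g x ≤ g0)
    simpa only [not_le] using this
  obtain ⟨s, t, q1, q2, q3, q4⟩ := sandwich L U g h
    (by
      intro x hx y hy
      exact (hmax x hx).trans_lt (Finset.mem_filter.1 hy).2) (2 * d + 2) (2 * d + 1)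
    (by omega) (by omega) (by omega) (by omega)
  let f : (Fin d → ℝ) →ₗ[ℝ] ℝ := h - s • g
  have hf : ∀ x, f x = h x - s * g x := by intro x; simp [f]
  have htie := ties S hgen f (hh s) t
  simp only [← hf] at q1 q2 q3 q4
  -- quadrant counts
  have hsplit : ∀ T ⊆ S, (T.filter (fun x => f x ≤ t)).card ≤
      (T.filter (fun x => f x < t)).card + d := by
    intro T hT
    refine le_trans ?_ (Nat.add_le_add_left htie _)
    refine le_trans (Finset.card_le_card ?_) (Finset.card_union_le _ _)
    intro x hx
    simp only [Finset.mem_union, Finset.mem_filter] at hx ⊢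
    rcases hx.2.lt_or_eq with h' | h'
    · exact Or.inl ⟨hx.1, h'⟩
    · exact Or.inr ⟨hT hx.1, h'⟩
  have c1 := hsplit L (Finset.filter_subset _ _)
  have c3 := hsplit U (Finset.filter_subset _ _)
  -- upper right part
  let T := U.filter (fun x => t ≤ f x)
  have hTmem : ∀ x, x ∈ T ↔ x ∈ S ∧ g0 < g x ∧ t ≤ f x := by
    intro x; simp [T, U, and_assoc]
  have hTS : T ⊆ S := fun x hx => ((hTmem x).1 hx).1
  have hTc : (n - 3) * (d + 1) ≤ T.card := by
    obtain ⟨k, rfl⟩ : ∃ k, n = k + 4 := ⟨n - 4, by omega⟩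
    have : U.card + 1 - (2 * d + 1) ≤ T.card := q4
    have e1 : (k + 4 - 3) * (d + 1) = k * d + k + d + 1 := by
      rw [show k + 4 - 3 = k + 1 by omega]; ring
    have e2 : (k + 4) * d = k * d + 4 * d := by ring
    rw [e1]
    rw [e2] at hcard
    omega
  let key : (Fin d → ℝ) → ℝ ×ₗ ℝ := fun x => toLex ((f x - t) / (g x - g0), - g x)
  have hkinj : Set.InjOn key T := by
    intro x hx y hy hxy
    have : (key x).2 = (key y).2 := by rw [hxy]
    refine hg (hTS hx) (hTS hy) ?_
    have h2 : - g x = - g y := this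
    linarith
  let r : (Fin d → ℝ) → ℕ := rk T key
  obtain ⟨blk, hblk⟩ : ∃ blk : (Fin d → ℝ) → ℕ,
      ∀ x, blk x = bk n (g x) g0 (f x) t (r x / (d + 1)) := ⟨_, fun x => rfl⟩
  have b0 : ∀ x, blk x = 0 ↔ g x ≤ g0 ∧ f x < t := fun x => by
    rw [hblk]; exact bk_zero hn _ _ _ _ _
  have bl : ∀ x, blk x = n - 1 ↔ g x ≤ g0 ∧ t ≤ f x := fun x => by
    rw [hblk]; exact bk_last hn _ _ _ _ _
  have b1 : ∀ x, blk x = 1 ↔ g0 < g x ∧ f x < t := fun x => by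
    rw [hblk]; exact bk_one hn _ _ _ _ _
  have bm : ∀ x i, 2 ≤ i → i ≤ n - 2 →
      (blk x = i ↔ g0 < g x ∧ t ≤ f x ∧ min (r x / (d + 1)) (n - 4) = i - 2) :=
    fun x i h2 hi => by
      rw [hblk]; exact bk_mid hn _ _ _ _ _ h2 hi
  refine ⟨blk, ?_, ?_, ?_, ?_⟩
  · intro x _
    rw [hblk]
    unfold bk
    split_ifs <;> omega
  · have : S.filter (fun x => blk x = 0) = L.filter (fun x => f x < t) := by
      rw [hL, Finset.filter_filter]; simp only [b0]
    rw [this]; omega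
  · intro i hi
    rcases Nat.lt_or_ge i 2 with hi2 | hi2
    · interval_cases i
      · have : S.filter (fun x => blk x = 0) = L.filter (fun x => f x < t) := by
          rw [hL, Finset.filter_filter]; simp only [b0]
        rw [this]; omega
      · have : S.filter (fun x => blk x = 1) = U.filter (fun x => f x < t) := by
          simp only [U]; rw [Finset.filter_filter]; simp only [b1]
        rw [this]; omega
    · by_cases hil : i = n - 1
      · have : S.filter (fun x => blk x = i) = L.filter (fun x => t ≤ f x) := by
          rw [hL, Finset.filter_filter, hil]; simp only [bl]
        rw [this]; omega
      · have hle : (i - 2 + 1) * (d + 1) ≤ T.card :=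
          le_trans (Nat.mul_le_mul_right _ (by omega)) hTc
        have hc := rk_count T key hkinj ((i - 2) * (d + 1)) ((i - 2 + 1) * (d + 1)) hle
        have e : (i - 2 + 1) * (d + 1) - (i - 2) * (d + 1) = d + 1 := by
          rw [← Nat.sub_mul]; simp
        rw [e] at hc
        rw [← hc]
        refine Finset.card_le_card fun x hx => ?_
        obtain ⟨hxT, h1, h2⟩ := Finset.mem_filter.1 hx
        obtain ⟨hxS, hx1, hx2⟩ := (hTmem x).1 hxT
        refine Finset.mem_filter.2 ⟨hxS, (bm x i hi2 (by omega)).2 ⟨hx1, hx2, ?_⟩⟩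
        have : r x / (d + 1) = i - 2 := by
          apply Nat.div_eq_of_lt_le h1 h2
        rw [this]; omega
  · intro i j hij hj hne
    have hp : ∀ i, 1 ≤ i → prv n i = i - 1 := by
      intro i hi; unfold prv; rw [if_neg (by omega)]
    rcases Nat.lt_or_ge i 2 with hi2 | hi2
    · interval_cases i
      · -- bottom versus upper
        refine (lex_sep S _ _ (fun x hx => hx.1) (fun x hx => hx.1) (-g) 0 (-g0) 0 ?_ ?_).symm
        · rintro x ⟨hx, hb⟩
          left
          rw [hp j (by omega)] at hb
          simp only [LinearMap.neg_apply, neg_lt_neg_iff]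
          by_contra hcon
          have : blk x = 0 ∨ blk x = n - 1 := by
            rcases lt_or_ge (f x) t with h' | h'
            · exact Or.inl ((b0 x).2 ⟨not_lt.1 hcon, h'⟩)
            · exact Or.inr ((bl x).2 ⟨not_lt.1 hcon, h'⟩)
          omega
        · rintro x ⟨hx, hb⟩
          have : g x ≤ g0 := by
            rcases hb with hb | hb
            · exact ((bl x).1 (by simpa [prv] using hb)).1
            · exact ((b0 x).1 hb).1
          simp only [LinearMap.neg_apply, neg_lt_neg_iff, LinearMap.zero_apply, le_refl, and_true,
            neg_inj]
          exact this.lt_or_eq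
      · -- left versus right
        refine lex_sep S _ _ (fun x hx => hx.1) (fun x hx => hx.1) f 0 t 0 ?_ ?_
        · rintro x ⟨hx, hb⟩
          left
          rcases hb with hb | hb
          · exact ((b0 x).1 (by simpa [prv] using hb)).2
          · exact ((b1 x).1 hb).2
        · rintro x ⟨hx, hb⟩
          have : t ≤ f x := by
            by_contra hcon
            rw [hp j (by omega)] at hb
            have : blk x = 0 ∨ blk x = 1 := by
              rcases lt_or_ge g0 (g x) with h' | h'
              · exact Or.inr ((b1 x).2 ⟨h', not_le.1 hcon⟩)
              · exact Or.inl ((b0 x).2 ⟨h', not_le.1 hcon⟩)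
            omega
          simp only [LinearMap.zero_apply, le_refl, and_true]
          rcases this.lt_or_eq with h' | h'
          · exact Or.inl h'
          · exact Or.inr h'.symm
    · -- a ratio cut
      let R := (i - 1) * (d + 1)
      have hR : R < T.card := by
        refine lt_of_lt_of_le ?_ hTc
        exact Nat.mul_lt_mul_of_pos_right (by omega) (by omega)
      obtain ⟨p, hpT, hpR⟩ : ∃ p ∈ T, r p = R := by
        have : R ∈ T.image (rk T key) := by
          rw [rk_image T key hkinj]; exact Finset.mem_range.2 hR
        obtain ⟨p, hpT, hpR⟩ := Finset.mem_image.1 this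
        exact ⟨p, hpT, hpR⟩
      obtain ⟨hpS, hp1, hp2⟩ := (hTmem p).1 hpT
      let c : ℝ := (f p - t) / (g p - g0)
      have hc : 0 ≤ c := div_nonneg (by linarith) (by linarith)
      have hkey : ∀ x, key x < key p ↔ (f x - t) / (g x - g0) < c ∨
          ((f x - t) / (g x - g0) = c ∧ - g x < - g p) := by
        intro x
        simp only [key, Prod.Lex.toLex_lt_toLex]
        rfl
      have hkey' : ∀ x, key p ≤ key x ↔ c < (f x - t) / (g x - g0) ∨
          (c = (f x - t) / (g x - g0) ∧ - g p ≤ - g x) := by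
        intro x
        simp only [key, Prod.Lex.toLex_le_toLex]
        rfl
      refine lex_sep S _ _ (fun x hx => hx.1) (fun x hx => hx.1) (f - c • g) (-g) (t - c * g0)
        (- g p) ?_ ?_
      · rintro x ⟨hx, hb⟩
        rw [hp i (by omega)] at hb
        simp only [LinearMap.sub_apply, LinearMap.smul_apply, smul_eq_mul, LinearMap.neg_apply]
        have hgx : g0 < g x := by
          by_contra hcon
          have : blk x = 0 ∨ blk x = n - 1 := by
            rcases lt_or_ge (f x) t with h' | h'
            · exact Or.inl ((b0 x).2 ⟨not_lt.1 hcon, h'⟩)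
            · exact Or.inr ((bl x).2 ⟨not_lt.1 hcon, h'⟩)
          omega
        have hpos : 0 < g x - g0 := by linarith
        rcases lt_or_ge (f x) t with h' | h'
        · left; nlinarith
        · have hxT : x ∈ T := (hTmem x).2 ⟨hx, hgx, h'⟩
          have hrx : r x < R := by
            have hb2 : blk x = 2 + min (r x / (d + 1)) (n - 4) := by
              rw [hblk]; unfold bk; rw [if_neg (by linarith), if_neg (by linarith)]
            have : r x / (d + 1) < i - 1 := by omega
            exact (Nat.div_lt_iff_lt_mul (by omega)).1 this
          have hk : key x < key p := by
            by_contra hcon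
            have := rk_mono T key (not_lt.1 hcon)
            change r p ≤ r x at this
            omega
          rcases (hkey x).1 hk with h3 | ⟨h3, h4⟩
          · left
            rw [div_lt_iff₀ hpos] at h3
            linarith
          · right
            rw [div_eq_iff hpos.ne'] at h3
            exact ⟨by linarith, h4⟩
      · rintro x ⟨hx, hb⟩
        rw [hp j (by omega)] at hb
        simp only [LinearMap.sub_apply, LinearMap.smul_apply, smul_eq_mul, LinearMap.neg_apply]
        have hfx : t ≤ f x := by
          by_contra hcon
          have : blk x = 0 ∨ blk x = 1 := by
            rcases lt_or_ge g0 (g x) with h' | h'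
            · exact Or.inr ((b1 x).2 ⟨h', not_le.1 hcon⟩)
            · exact Or.inl ((b0 x).2 ⟨h', not_le.1 hcon⟩)
          omega
        rcases lt_or_ge g0 (g x) with hgx | hgx
        · have hpos : 0 < g x - g0 := by linarith
          have hxT : x ∈ T := (hTmem x).2 ⟨hx, hgx, hfx⟩
          have hrx : R ≤ r x := by
            have hb2 : blk x = 2 + min (r x / (d + 1)) (n - 4) := by
              rw [hblk]; unfold bk; rw [if_neg (by linarith), if_neg (by linarith)]
            have : i - 1 ≤ r x / (d + 1) := by omega
            exact (Nat.le_div_iff_mul_le (by omega)).1 this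
          have hk : key p ≤ key x := by
            by_contra hcon
            have := rk_strict T key hxT (not_le.1 hcon)
            change r x < r p at this
            omega
          rcases (hkey' x).1 hk with h3 | ⟨h3, h4⟩
          · left
            rw [lt_div_iff₀ hpos] at h3
            linarith
          · right
            rw [eq_div_iff hpos.ne'] at h3
            exact ⟨by linarith, h4⟩
        · have : t - c * g0 ≤ f x - c * g x := by nlinarith
          rcases this.lt_or_eq with h' | h'
          · exact Or.inl h'
          · exact Or.inr ⟨h'.symm, by linarith⟩

end CyclePart

/-- For `n ≥ 4`, `d ≥ 2`, every set of at least `nd + n + 4d` points in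
general position in `ℝ^d` admits a partition into `n` parts `S_0, …, S_{n-1}` whose nerve is
the `n`-cycle: convex hulls of parts intersect iff their indices are cyclically consecutive,
and there are no triple intersections. -/
theorem cycle_partition_induced
    {d n : ℕ} (hd : 2 ≤ d) (hn : 4 ≤ n)
    (S : Finset (Fin d → ℝ)) (hcard : n * d + n + 4 * d ≤ S.card)
    -- general position: any `d+1` points of `S` are affinely independent
    (hgen : ∀ W : Finset (Fin d → ℝ), W ⊆ S → W.card = d + 1 →
      AffineIndependent ℝ (fun x : W => (x : Fin d → ℝ))) :
    ∃ P : Fin n → Finset (Fin d → ℝ),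
      (∀ i, (P i).Nonempty) ∧
      (∀ i j, i ≠ j → Disjoint (P i) (P j)) ∧
      S = Finset.univ.biUnion P ∧
      (∀ i j : Fin n, i ≠ j →
        ((convexHull ℝ (P i : Set (Fin d → ℝ)) ∩
          convexHull ℝ (P j : Set (Fin d → ℝ))).Nonempty ↔
          ((i : ℕ) + 1 = (j : ℕ) ∨ (j : ℕ) + 1 = (i : ℕ) ∨
            ((i : ℕ) = 0 ∧ (j : ℕ) = n - 1) ∨ ((j : ℕ) = 0 ∧ (i : ℕ) = n - 1)))) ∧
      (∀ i j k, i ≠ j → j ≠ k → i ≠ k →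
        convexHull ℝ (P i : Set (Fin d → ℝ)) ∩
          convexHull ℝ (P j : Set (Fin d → ℝ)) ∩
          convexHull ℝ (P k : Set (Fin d → ℝ)) = ∅) := by
  obtain ⟨blk, h1, h2, h3, h4⟩ := CyclePart.main hd hn S hcard hgen
  exact CyclePart.partition_of_blocks hn S blk h1 h2 h3 h4
end

section
/- Let S be a finite set of points in the plane, n ≥ 4, d ≥ 1, with |S| ≥ nd + n + 4d. Then there exists a point p and n closed sectors (angular regions with apex p) partitioning the plane such that: (i) each sector contains at least d+1 points of S in its interior, and (ii) the union of any two adjacent sectors is contained in a closed half-plane (combined angle at most π). -/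
open scoped Classical

/-- The closed sector with apex `p` spanned by the directions `u` and `v`
(all nonnegative combinations of the two directions, based at `p`). -/
def Sector (p u v : Fin 2 → ℝ) : Set (Fin 2 → ℝ) :=
  {x | ∃ a b : ℝ, 0 ≤ a ∧ 0 ≤ b ∧ x = p + a • u + b • v}

open Real in
/-- A chain of `k` intervals from `a` to `b`, each of length at most `π/2` and
containing at least `m` elements of `Φ`. -/
def SecChain (Φ : Finset ℝ) (m k : ℕ) (a b : ℝ) : Prop :=
  ∃ θ : ℕ → ℝ, θ 0 = a ∧ θ k = b ∧
    (∀ i < k, θ i < θ (i+1) ∧ θ (i+1) - θ i ≤ Real.pi / 2 ∧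
      m ≤ (Φ.filter (fun x => θ i < x ∧ x < θ (i+1))).card) ∧
    ∀ i ≤ k, θ i ∉ Φ

lemma secChain_append {Φ : Finset ℝ} {m k l : ℕ} {a b c : ℝ}
    (h1 : SecChain Φ m k a b) (h2 : SecChain Φ m l b c) : SecChain Φ m (k + l) a c := by
  obtain ⟨θ, h0, hk, hs, hn⟩ := h1
  obtain ⟨η, g0, gk, gs, gn⟩ := h2
  refine ⟨fun i => if i ≤ k then θ i else η (i - k), by simp [h0], ?_, ?_, ?_⟩
  · by_cases hl : l = 0
    · subst hl; simp [hk, ← gk, g0]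
    · have : ¬ (k + l ≤ k) := by omega
      simp [this, gk]
  · intro i hi
    rcases lt_trichotomy i k with h | h | h
    · have h' : i + 1 ≤ k := h
      simp only [h.le, h', if_true]
      exact hs i h
    · subst h
      have h' : ¬ (i + 1 ≤ i) := by omega
      simp only [le_refl, h', if_true, if_false]
      have := gs 0 (by omega)
      rw [g0, ← hk] at this
      simpa using this
    · have h1 : ¬ (i ≤ k) := by omega
      have h' : ¬ (i + 1 ≤ k) := by omega
      simp only [h1, h', if_false]
      have := gs (i - k) (by omega)
      rwa [show i - k + 1 = i + 1 - k by omega] at this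
  · intro i hi
    by_cases h : i ≤ k
    · simp only [h, if_true]; exact hn i h
    · simp only [h, if_false]; exact gn _ (by omega)

lemma exists_split {α : Type*} [DecidableEq α] (f : α → ℝ) (T : Finset α) (m : ℕ) (hm : m ≤ T.card) :
    ∃ A ⊆ T, A.card = m ∧ ∀ x ∈ A, ∀ y ∈ T \ A, f x ≤ f y := by
  induction m with
  | zero => exact ⟨∅, by simp, by simp, by simp⟩
  | succ m ih =>
    obtain ⟨A, hA, hc, hf⟩ := ih (by omega)
    have hne : (T \ A).Nonempty := by
      rw [← Finset.card_pos, Finset.card_sdiff_of_subset hA]; omega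
    obtain ⟨z, hz, hmin⟩ := Finset.exists_min_image (T \ A) f hne
    have hz' := Finset.mem_sdiff.1 hz
    refine ⟨insert z A, ?_, ?_, ?_⟩
    · intro x hx
      rcases Finset.mem_insert.1 hx with h | h
      · rw [h]; exact hz'.1
      · exact hA h
    · rw [Finset.card_insert_of_notMem hz'.2, hc]
    · intro x hx y hy
      have hy' : y ∈ T \ A := by
        simp only [Finset.mem_sdiff, Finset.mem_insert, not_or] at hy ⊢
        exact ⟨hy.1, hy.2.2⟩
      rcases Finset.mem_insert.1 hx with h | h
      · rw [h]; exact hmin y hy'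
      · exact hf x h y hy'

/-- strictly separated finite sets of reals can be separated by a point off a finite set -/
lemma exists_between_finset (A B Φ : Finset ℝ) (hA : A.Nonempty) (hB : B.Nonempty)
    (h : ∀ x ∈ A, ∀ y ∈ B, x < y) :
    ∃ c, c ∉ Φ ∧ (∀ x ∈ A, x < c) ∧ (∀ y ∈ B, c < y) := by
  have hlt : A.max' hA < B.min' hB := h _ (A.max'_mem hA) _ (B.min'_mem hB)
  obtain ⟨c, hc, hc'⟩ := (Set.Ioo_infinite hlt).exists_notMem_finset Φ
  exact ⟨c, hc', fun x hx => lt_of_le_of_lt (A.le_max' x hx) hc.1,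
    fun y hy => lt_of_lt_of_le hc.2 (B.min'_le y hy)⟩

lemma secChain_exists (Φ : Finset ℝ) (m : ℕ) (hm : 1 ≤ m) (b : ℝ) (hb : b ∉ Φ) (k : ℕ) :
    ∀ a : ℝ, a ∉ Φ → a < b → b - a ≤ Real.pi / 2 →
    (k + 1) * m ≤ (Φ.filter (fun x => a < x ∧ x < b)).card → SecChain Φ m (k + 1) a b := by
  induction k with
  | zero =>
    intro a ha hab hlen hcard
    refine ⟨fun i => if i = 0 then a else b, by simp, by simp, ?_, ?_⟩
    · intro i hi
      obtain rfl : i = 0 := by omega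
      simp only [if_true]
      refine ⟨by simpa using hab, by simpa using hlen, by simpa using hcard⟩
    · intro i _
      by_cases h : i = 0 <;> simp [h, ha, hb]
  | succ k ih =>
    intro a ha hab hlen hcard
    set T := Φ.filter (fun x => a < x ∧ x < b) with hT
    have e : (k + 1 + 1) * m = (k + 1) * m + m := by ring
    have hkm : 1 ≤ (k + 1) * m := Nat.mul_pos (by omega) hm
    obtain ⟨A, hAT, hAc, hA⟩ := exists_split (fun x : ℝ => x) T m (by omega)
    have hBc : (T \ A).card = T.card - m := by rw [Finset.card_sdiff_of_subset hAT, hAc]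
    obtain ⟨c, hc, hc1, hc2⟩ := exists_between_finset A (T \ A) Φ
      (Finset.card_pos.1 (by omega)) (Finset.card_pos.1 (by omega)) (by
        intro x hx y hy
        refine lt_of_le_of_ne (hA x hx y hy) ?_
        rintro rfl
        exact (Finset.mem_sdiff.1 hy).2 hx)
    obtain ⟨x0, hx0⟩ : A.Nonempty := Finset.card_pos.1 (by omega)
    obtain ⟨y0, hy0⟩ : (T \ A).Nonempty := Finset.card_pos.1 (by omega)
    have hx0T := (Finset.mem_filter.1 (hAT hx0)).2
    have hy0T := (Finset.mem_filter.1 (Finset.mem_sdiff.1 hy0).1).2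
    have hac : a < c := hx0T.1.trans (hc1 _ hx0)
    have hcb : c < b := (hc2 _ hy0).trans hy0T.2
    have h2 : SecChain Φ m (k + 1) c b := by
      refine ih c hc hcb (by linarith) ?_
      refine le_trans (b := (T \ A).card) (by omega) (Finset.card_le_card ?_)
      intro y hy
      have := Finset.mem_filter.1 (Finset.mem_sdiff.1 hy).1
      exact Finset.mem_filter.2 ⟨this.1, hc2 y hy, this.2.2⟩
    have h1 : SecChain Φ m 1 a c := by
      refine ⟨fun i => if i = 0 then a else c, by simp, by simp, ?_, ?_⟩
      · intro i hi
        obtain rfl : i = 0 := by omega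
        simp only [if_true]
        refine ⟨by simpa using hac, by simp; linarith, ?_⟩
        rw [← hAc]
        refine Finset.card_le_card ?_
        intro y hy
        have := Finset.mem_filter.1 (hAT hy)
        exact Finset.mem_filter.2 ⟨this.1, this.2.1, by simpa using hc1 y hy⟩
      · intro i _
        by_cases h : i = 0 <;> simp [h, ha, hc]
    have := secChain_append h1 h2
    rwa [show 1 + (k + 1) = k + 1 + 1 by omega] at this

lemma choose_counts (d n m1 m2 m3 m4 : ℕ) (hn : 4 ≤ n) (h1 : d + 1 ≤ m1) (h2 : d + 1 ≤ m2)
    (h3 : d + 1 ≤ m3) (h4 : d + 1 ≤ m4) (hs : n * d + n + 4 * d ≤ m1 + m2 + m3 + m4) :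
    ∃ k1 k2 k3 k4 : ℕ, (k1 + 1) + (k2 + 1) + (k3 + 1) + (k4 + 1) = n ∧
      (k1 + 1) * (d + 1) ≤ m1 ∧ (k2 + 1) * (d + 1) ≤ m2 ∧ (k3 + 1) * (d + 1) ≤ m3 ∧
      (k4 + 1) * (d + 1) ≤ m4 := by
  have key : ∀ m, d + 1 ≤ m → 1 ≤ m / (d + 1) ∧ m ≤ m / (d + 1) * (d + 1) + d ∧
      (∀ k, k ≤ m / (d + 1) → k * (d + 1) ≤ m) := by
    intro m hm
    refine ⟨(Nat.one_le_div_iff (by omega)).2 hm, ?_, ?_⟩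
    · have h1 := Nat.div_add_mod m (d + 1)
      have h2 := Nat.mod_lt m (show d + 1 > 0 by omega)
      have h3 := mul_comm (d + 1) (m / (d + 1))
      omega
    · intro k hk
      exact (Nat.le_div_iff_mul_le (by omega)).1 hk
  obtain ⟨a1, b1, c1⟩ := key m1 h1
  obtain ⟨a2, b2, c2⟩ := key m2 h2
  obtain ⟨a3, b3, c3⟩ := key m3 h3
  obtain ⟨a4, b4, c4⟩ := key m4 h4
  generalize m1 / (d + 1) = q1 at *
  generalize m2 / (d + 1) = q2 at *
  generalize m3 / (d + 1) = q3 at *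
  generalize m4 / (d + 1) = q4 at *
  have hq : n ≤ q1 + q2 + q3 + q4 := by
    have : n * (d + 1) ≤ (q1 + q2 + q3 + q4) * (d + 1) := by nlinarith
    exact Nat.le_of_mul_le_mul_right this (by omega)
  obtain ⟨k1, k2, k3, k4, e, g1, g2, g3, g4⟩ : ∃ k1 k2 k3 k4 : ℕ,
      (k1 + 1) + (k2 + 1) + (k3 + 1) + (k4 + 1) = n ∧ k1 + 1 ≤ q1 ∧ k2 + 1 ≤ q2 ∧
      k3 + 1 ≤ q3 ∧ k4 + 1 ≤ q4 := by
    refine ⟨min (q1 - 1) (n - 4), min (q2 - 1) (n - 4 - min (q1 - 1) (n - 4)),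
      min (q3 - 1) (n - 4 - min (q1 - 1) (n - 4) -
        min (q2 - 1) (n - 4 - min (q1 - 1) (n - 4))),
      n - 4 - min (q1 - 1) (n - 4) - min (q2 - 1) (n - 4 - min (q1 - 1) (n - 4)) -
      min (q3 - 1) (n - 4 - min (q1 - 1) (n - 4) -
        min (q2 - 1) (n - 4 - min (q1 - 1) (n - 4))), ?_, ?_, ?_, ?_, ?_⟩ <;> omega
  exact ⟨k1, k2, k3, k4, e, c1 _ g1, c2 _ g2, c3 _ g3, c4 _ g4⟩

/-- min over `k`-subsets of the max of `f`: the `k`-th order statistic. -/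
noncomputable def ordMax {α : Type*} (f : α → ℝ) (A : Finset α) : ℝ :=
  if h : A.Nonempty then A.sup' h f else 0

lemma exists_ordStat {α : Type*} (f : ℝ → α → ℝ) (hf : ∀ x, Continuous fun s => f s x)
    (T : Finset α) (k : ℕ) (hk : 1 ≤ k) (hT : k ≤ T.card) :
    ∃ g : ℝ → ℝ, Continuous g ∧ ∀ s, (∃ x ∈ T, f s x = g s) ∧
      (T.filter (fun x => f s x < g s)).card < k ∧
      k ≤ (T.filter (fun x => f s x ≤ g s)).card := by
  have hne : (T.powersetCard k).Nonempty := Finset.powersetCard_nonempty.2 hT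
  refine ⟨fun s => (T.powersetCard k).inf' hne (fun A => ordMax (f s) A), ?_, ?_⟩
  · apply Continuous.finset_inf'_apply
    intro A _
    unfold ordMax
    by_cases h : A.Nonempty
    · simp only [h, dite_true]
      exact Continuous.finset_sup'_apply h (fun x _ => hf x)
    · simp only [h, dite_false]
      exact continuous_const
  · intro s
    obtain ⟨A, hA, hAe⟩ := Finset.exists_mem_eq_inf' hne (fun A => ordMax (f s) A)
    have hlow : ∀ B ∈ T.powersetCard k,
        (T.powersetCard k).inf' hne (fun A => ordMax (f s) A) ≤ ordMax (f s) B :=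
      fun B hB => Finset.inf'_le _ hB
    beta_reduce
    generalize (T.powersetCard k).inf' hne (fun A => ordMax (f s) A) = t at *
    have hA' := Finset.mem_powersetCard.1 hA
    have hAn : A.Nonempty := Finset.card_pos.1 (by omega)
    have hAe' : t = A.sup' hAn (f s) := by rw [hAe]; simp [ordMax, hAn]
    refine ⟨?_, ?_, ?_⟩
    · obtain ⟨x, hx, hxe⟩ := Finset.exists_mem_eq_sup' hAn (f s)
      exact ⟨x, hA'.1 hx, by rw [hAe', hxe]⟩
    · by_contra hcon
      push Not at hcon
      obtain ⟨B, hB, hBc⟩ := Finset.exists_subset_card_eq hcon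
      have hBn : B.Nonempty := Finset.card_pos.1 (by omega)
      have := hlow B (Finset.mem_powersetCard.2 ⟨hB.trans (Finset.filter_subset _ _), hBc⟩)
      simp only [ordMax, hBn, dite_true] at this
      obtain ⟨x, hx, hxe⟩ := Finset.exists_mem_eq_sup' hBn (f s)
      have h2 := (Finset.mem_filter.1 (hB hx)).2
      rw [hxe] at this
      linarith
    · rw [← hA'.2]
      refine Finset.card_le_card ?_
      intro x hx
      exact Finset.mem_filter.2 ⟨hA'.1 hx, by rw [hAe']; exact Finset.le_sup' (f s) hx⟩

lemma collinear_line (s t : ℝ) (P : Set (Fin 2 → ℝ)) (h : ∀ x ∈ P, x 1 - s * x 0 = t) :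
    Collinear ℝ P := by
  rw [collinear_iff_exists_forall_eq_smul_vadd]
  refine ⟨![0, t], ![1, s], fun x hx => ⟨x 0, ?_⟩⟩
  have := h x hx
  ext i
  fin_cases i
  · simp
  · simp; linarith

lemma collinear_vert (c : ℝ) (P : Set (Fin 2 → ℝ)) (h : ∀ x ∈ P, x 0 = c) :
    Collinear ℝ P := by
  rw [collinear_iff_exists_forall_eq_smul_vadd]
  refine ⟨![c, 0], ![0, 1], fun x hx => ⟨x 1, ?_⟩⟩
  have := h x hx
  ext i
  fin_cases i
  · simp [this]
  · simp

lemma exists_vert {d : ℕ}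
    (S : Finset (Fin 2 → ℝ)) (hcard : 8 * d + 4 ≤ S.card)
    (hgen : ∀ x ∈ S, ∀ y ∈ S, ∀ z ∈ S, x ≠ y → y ≠ z → x ≠ z →
      ¬ Collinear ℝ ({x, y, z} : Set (Fin 2 → ℝ))) :
    ∃ c : ℝ, (∀ x ∈ S, x 0 ≠ c) ∧ 4 * d + 1 ≤ (S.filter (fun x => x 0 < c)).card ∧
      4 * d + 1 ≤ (S.filter (fun x => c < x 0)).card := by
  obtain ⟨A, hAS, hAc, hA⟩ := exists_split (fun x : Fin 2 → ℝ => x 0) S (4 * d + 1) (by omega)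
  have hBc : (S \ A).card = S.card - (4 * d + 1) := by
    rw [Finset.card_sdiff_of_subset hAS, hAc]
  obtain ⟨M, hMS, hMc, hM⟩ := exists_split (fun x : Fin 2 → ℝ => x 0) (S \ A) 1 (by omega)
  have hCc : ((S \ A) \ M).card = S.card - (4 * d + 1) - 1 := by
    rw [Finset.card_sdiff_of_subset hMS, hMc, hBc]
  obtain ⟨z, rfl⟩ := Finset.card_eq_one.1 hMc
  have hz := hMS (Finset.mem_singleton_self z)
  have hlt : ∀ x ∈ A, ∀ y ∈ (S \ A) \ {z}, x 0 < y 0 := by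
    intro x hx y hy
    have hy1 := Finset.mem_sdiff.1 hy
    have h1 := hA x hx z hz
    have h2 := hM z (Finset.mem_singleton_self z) y hy
    refine lt_of_le_of_ne (h1.trans h2) ?_
    intro heq
    have hzx : x ≠ z := by rintro rfl; exact (Finset.mem_sdiff.1 hz).2 hx
    have hxy : x ≠ y := by rintro rfl; exact (Finset.mem_sdiff.1 hy1.1).2 hx
    have hzy : z ≠ y := by rintro rfl; exact hy1.2 (Finset.mem_singleton_self _)
    refine hgen x (hAS hx) z (Finset.mem_sdiff.1 hz).1 y (Finset.mem_sdiff.1 hy1.1).1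
      hzx hzy hxy (collinear_vert (x 0) _ ?_)
    intro w hw
    simp only [Set.mem_insert_iff, Set.mem_singleton_iff] at hw
    rcases hw with rfl | rfl | rfl
    · rfl
    · linarith
    · exact heq.symm
  obtain ⟨c, hc, hc1, hc2⟩ := exists_between_finset (A.image (fun x => x 0))
    (((S \ A) \ {z}).image (fun x => x 0)) (S.image (fun x => x 0))
    ((Finset.card_pos.1 (by omega)).image _) ((Finset.card_pos.1 (by omega)).image _) (by
      intro x hx y hy
      obtain ⟨x', hx', rfl⟩ := Finset.mem_image.1 hx
      obtain ⟨y', hy', rfl⟩ := Finset.mem_image.1 hy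
      exact hlt x' hx' y' hy')
  refine ⟨c, ?_, ?_, ?_⟩
  · rintro x hx rfl
    exact hc (Finset.mem_image_of_mem _ hx)
  · rw [← hAc]
    exact Finset.card_le_card fun x hx =>
      Finset.mem_filter.2 ⟨hAS hx, hc1 _ (Finset.mem_image_of_mem _ hx)⟩
  · refine le_trans (b := ((S \ A) \ {z}).card) (by omega) (Finset.card_le_card fun x hx => ?_)
    exact Finset.mem_filter.2 ⟨(Finset.mem_sdiff.1 (Finset.mem_sdiff.1 hx).1).1,
      hc2 _ (Finset.mem_image_of_mem _ hx)⟩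

lemma exists_line {d : ℕ} (hd : 1 ≤ d)
    (L R : Finset (Fin 2 → ℝ)) (hLc : 4 * d + 1 ≤ L.card) (hRc : 4 * d + 1 ≤ R.card)
    (hLR : ∀ x ∈ L, ∀ y ∈ R, x 0 < y 0)
    (hgen : ∀ x ∈ L ∪ R, ∀ y ∈ L ∪ R, ∀ z ∈ L ∪ R, x ≠ y → y ≠ z → x ≠ z →
      ¬ Collinear ℝ ({x, y, z} : Set (Fin 2 → ℝ))) :
    ∃ s t : ℝ, d + 1 ≤ (L.filter (fun x => x 1 - s * x 0 < t)).card ∧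
      d + 1 ≤ (L.filter (fun x => t < x 1 - s * x 0)).card ∧
      d + 1 ≤ (R.filter (fun x => x 1 - s * x 0 < t)).card ∧
      d + 1 ≤ (R.filter (fun x => t < x 1 - s * x 0)).card := by
  have hcont : ∀ x : Fin 2 → ℝ, Continuous fun s : ℝ => x 1 - s * x 0 := by
    intro x; fun_prop
  obtain ⟨g, hg, hgs⟩ := exists_ordStat (fun s (x : Fin 2 → ℝ) => x 1 - s * x 0) hcont L
    (2 * d + 1) (by omega) (by omega)
  obtain ⟨h, hh, hhs⟩ := exists_ordStat (fun s (x : Fin 2 → ℝ) => x 1 - s * x 0) hcont R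
    (2 * d + 1) (by omega) (by omega)
  have htop : ∃ s, h s ≤ g s := by
    have : ∀ᶠ s : ℝ in Filter.atTop, ∀ x ∈ L, ∀ y ∈ R, y 1 - s * y 0 ≤ x 1 - s * x 0 := by
      rw [Filter.eventually_all_finset]; intro x hx
      rw [Filter.eventually_all_finset]; intro y hy
      filter_upwards [Filter.eventually_ge_atTop ((y 1 - x 1) / (y 0 - x 0))] with s hs
      have := hLR x hx y hy
      rw [div_le_iff₀ (by linarith)] at hs
      linarith
    obtain ⟨s, hs⟩ := this.exists
    obtain ⟨x, hx, hxe⟩ := (hgs s).1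
    obtain ⟨y, hy, hye⟩ := (hhs s).1
    exact ⟨s, by rw [← hxe, ← hye]; exact hs x hx y hy⟩
  have hbot : ∃ s, g s ≤ h s := by
    have : ∀ᶠ s : ℝ in Filter.atBot, ∀ x ∈ L, ∀ y ∈ R, x 1 - s * x 0 ≤ y 1 - s * y 0 := by
      rw [Filter.eventually_all_finset]; intro x hx
      rw [Filter.eventually_all_finset]; intro y hy
      filter_upwards [Filter.eventually_le_atBot ((y 1 - x 1) / (y 0 - x 0))] with s hs
      have := hLR x hx y hy
      rw [le_div_iff₀ (by linarith)] at hs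
      linarith
    obtain ⟨s, hs⟩ := this.exists
    obtain ⟨x, hx, hxe⟩ := (hgs s).1
    obtain ⟨y, hy, hye⟩ := (hhs s).1
    exact ⟨s, by rw [← hxe, ← hye]; exact hs x hx y hy⟩
  obtain ⟨s1, hs1⟩ := htop
  obtain ⟨s2, hs2⟩ := hbot
  obtain ⟨s, hs⟩ := intermediate_value_univ₂ hg hh hs2 hs1
  obtain ⟨⟨x, hx, hxe⟩, hL1, hL2⟩ := hgs s
  obtain ⟨⟨y, hy, hye⟩, hR1, hR2⟩ := hhs s
  rw [← hs] at hye hR1 hR2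
  generalize g s = t at *
  have hxy : x ≠ y := by rintro rfl; exact lt_irrefl _ (hLR x hx x hy)
  have honly : ∀ z ∈ L ∪ R, z 1 - s * z 0 = t → z = x ∨ z = y := by
    intro z hz hzt
    by_contra hcon
    push Not at hcon
    refine hgen z hz x (Finset.mem_union_left _ hx) y (Finset.mem_union_right _ hy)
      hcon.1 hxy hcon.2 (collinear_line s t _ ?_)
    intro w hw
    simp only [Set.mem_insert_iff, Set.mem_singleton_iff] at hw
    rcases hw with rfl | rfl | rfl <;> assumption
  have count : ∀ T : Finset (Fin 2 → ℝ), ∀ a, (∀ z ∈ T, z 1 - s * z 0 = t → z = a) →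
      4 * d + 1 ≤ T.card → (T.filter (fun x => x 1 - s * x 0 < t)).card < 2 * d + 1 →
      2 * d + 1 ≤ (T.filter (fun x => x 1 - s * x 0 ≤ t)).card →
      d + 1 ≤ (T.filter (fun x => x 1 - s * x 0 < t)).card ∧
      d + 1 ≤ (T.filter (fun x => t < x 1 - s * x 0)).card := by
    intro T a ha hT h1 h2
    have h3 : T.filter (fun x => x 1 - s * x 0 ≤ t) ⊆
        insert a (T.filter (fun x => x 1 - s * x 0 < t)) := by
      intro z hz
      have hz' := Finset.mem_filter.1 hz
      rcases lt_or_eq_of_le hz'.2 with h | h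
      · exact Finset.mem_insert_of_mem (Finset.mem_filter.2 ⟨hz'.1, h⟩)
      · exact Finset.mem_insert.2 (Or.inl (ha z hz'.1 h))
    have h4 := (Finset.card_le_card h3).trans (Finset.card_insert_le _ _)
    have h5 := Finset.card_filter_add_card_filter_not (s := T) (fun x => x 1 - s * x 0 ≤ t)
    simp only [not_le] at h5
    omega
  have cL := count L x (by
    intro z hz hzt
    rcases honly z (Finset.mem_union_left _ hz) hzt with h | h
    · exact h
    · subst h; exact absurd (hLR z hz z hy) (lt_irrefl _)) hLc hL1 hL2
  have cR := count R y (by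
    intro z hz hzt
    rcases honly z (Finset.mem_union_right _ hz) hzt with h | h
    · subst h; exact absurd (hLR z hx z hz) (lt_irrefl _)
    · exact h) hRc hR1 hR2
  exact ⟨s, t, cL.1, cL.2, cR.1, cR.2⟩

lemma exists_cross {d : ℕ} (hd : 1 ≤ d)
    (S : Finset (Fin 2 → ℝ)) (hcard : 8 * d + 4 ≤ S.card)
    (hgen : ∀ x ∈ S, ∀ y ∈ S, ∀ z ∈ S, x ≠ y → y ≠ z → x ≠ z →
      ¬ Collinear ℝ ({x, y, z} : Set (Fin 2 → ℝ))) :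
    ∃ c s t : ℝ, (∀ x ∈ S, x 0 - c ≠ 0) ∧ (∀ x ∈ S, x 1 - s * x 0 - t ≠ 0) ∧
      (∀ x ∈ S, ∀ y ∈ S, x ≠ y →
        (x 0 - c) * (y 1 - s * y 0 - t) ≠ (y 0 - c) * (x 1 - s * x 0 - t)) ∧
      d + 1 ≤ (S.filter (fun x => x 0 - c < 0 ∧ x 1 - s * x 0 - t < 0)).card ∧
      d + 1 ≤ (S.filter (fun x => 0 < x 0 - c ∧ x 1 - s * x 0 - t < 0)).card ∧
      d + 1 ≤ (S.filter (fun x => 0 < x 0 - c ∧ 0 < x 1 - s * x 0 - t)).card ∧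
      d + 1 ≤ (S.filter (fun x => x 0 - c < 0 ∧ 0 < x 1 - s * x 0 - t)).card := by
  obtain ⟨c, hc, hcL, hcR⟩ := exists_vert S hcard hgen
  have hsub : S.filter (fun x => x 0 < c) ∪ S.filter (fun x => c < x 0) ⊆ S :=
    Finset.union_subset (Finset.filter_subset _ _) (Finset.filter_subset _ _)
  obtain ⟨s, t, h1, h2, h3, h4⟩ := exists_line hd _ _ hcL hcR (by
    intro x hx y hy
    exact (Finset.mem_filter.1 hx).2.trans (Finset.mem_filter.1 hy).2)
    (fun x hx y hy z hz => hgen x (hsub hx) y (hsub hy) z (hsub hz))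
  have hne : ∀ b : ℝ, ∀ᶠ t' in nhdsWithin t (Set.Ioi t), t' ≠ b := by
    intro b
    rcases le_or_gt b t with h | h
    · filter_upwards [self_mem_nhdsWithin] with t' ht'
      exact (lt_of_le_of_lt h ht').ne'
    · filter_upwards [Ioo_mem_nhdsGT h] with t' ht'
      exact ht'.2.ne
  have hev1 : ∀ᶠ t' in nhdsWithin t (Set.Ioi t), ∀ x ∈ S, t' ≠ x 1 - s * x 0 := by
    rw [Filter.eventually_all_finset]; intro x _; exact hne _
  have hev2 : ∀ᶠ t' in nhdsWithin t (Set.Ioi t), ∀ x ∈ S, ∀ y ∈ S,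
      t' ≠ ((y 0 - c) * (x 1 - s * x 0) - (x 0 - c) * (y 1 - s * y 0)) / (y 0 - x 0) := by
    rw [Filter.eventually_all_finset]; intro x _
    rw [Filter.eventually_all_finset]; intro y _; exact hne _
  have hev3 : ∀ᶠ t' in nhdsWithin t (Set.Ioi t), ∀ x ∈ S,
      t < x 1 - s * x 0 → t' < x 1 - s * x 0 := by
    rw [Filter.eventually_all_finset]; intro x _
    by_cases h : t < x 1 - s * x 0
    · filter_upwards [Ioo_mem_nhdsGT h] with t' ht' _
      exact ht'.2
    · exact Filter.Eventually.of_forall fun t' h' => absurd h' h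
  obtain ⟨t', ⟨⟨e1, e2⟩, e3⟩, e4⟩ :=
    (((hev1.and hev2).and hev3).and self_mem_nhdsWithin).exists
  have e4 : t < t' := e4
  refine ⟨c, s, t', ?_, ?_, ?_, h1.trans (Finset.card_le_card ?_),
    h3.trans (Finset.card_le_card ?_), h4.trans (Finset.card_le_card ?_),
    h2.trans (Finset.card_le_card ?_)⟩
  · intro x hx h; exact hc x hx (by linarith)
  · intro x hx h; exact e1 x hx (by linarith)
  · intro x hx y hy hxy heq
    by_cases h0 : y 0 = x 0
    · rw [h0] at heq
      have := mul_left_cancel₀ (sub_ne_zero.2 (hc x hx)) heq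
      apply hxy
      ext i
      fin_cases i
      · exact h0.symm
      · simp; linarith
    · refine e2 x hx y hy ?_
      rw [eq_div_iff (sub_ne_zero.2 h0)]
      linarith
  all_goals
    intro x hx
    simp only [Finset.mem_filter] at hx ⊢
    obtain ⟨⟨hxS, hx0⟩, hx1⟩ := hx
    refine ⟨hxS, by linarith, ?_⟩
    first
    | linarith
    | linarith [e3 x hxS hx1]

/-- Direction at pseudo-angle `θ` in the sheared coordinates. -/
noncomputable def secDir (s θ : ℝ) : Fin 2 → ℝ :=
  ![Real.cos θ, s * Real.cos θ + Real.sin θ]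

/-- The point in sheared coordinates as a complex number. -/
noncomputable def secZ (c s t : ℝ) (x : Fin 2 → ℝ) : ℂ := ⟨x 0 - c, x 1 - s * x 0 - t⟩

/-- apex -/
def secApex (c s t : ℝ) : Fin 2 → ℝ := ![c, s * c + t]

lemma secZ_polar (c s t : ℝ) (x : Fin 2 → ℝ) :
    x 0 - c = ‖secZ c s t x‖ * Real.cos (secZ c s t x).arg ∧
    x 1 - s * x 0 - t = ‖secZ c s t x‖ * Real.sin (secZ c s t x).arg :=
  ⟨(Complex.norm_mul_cos_arg (secZ c s t x)).symm,
    (Complex.norm_mul_sin_arg (secZ c s t x)).symm⟩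

lemma eq_apex_add (c s t a θ b η : ℝ) (x : Fin 2 → ℝ)
    (h0 : x 0 - c = a * Real.cos θ + b * Real.cos η)
    (h1 : x 1 - s * x 0 - t = a * Real.sin θ + b * Real.sin η) :
    x = secApex c s t + a • secDir s θ + b • secDir s η := by
  ext i
  fin_cases i
  · simp [secApex, secDir]; linarith
  · simp only [secApex, secDir]
    simp
    have : s * x 0 = s * (c + (a * Real.cos θ + b * Real.cos η)) := by rw [← h0]; ring
    linarith

lemma of_eq_apex_add (c s t a θ b η : ℝ) (x : Fin 2 → ℝ)
    (h : x = secApex c s t + a • secDir s θ + b • secDir s η) :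
    x 0 - c = a * Real.cos θ + b * Real.cos η ∧
    x 1 - s * x 0 - t = a * Real.sin θ + b * Real.sin η := by
  subst h
  constructor
  · simp [secApex, secDir]; ring
  · simp [secApex, secDir]; ring

lemma mem_sector_iff (c s t a b : ℝ) (hab : a < b) (hab' : b - a ≤ Real.pi / 2)
    (x : Fin 2 → ℝ) :
    x ∈ Sector (secApex c s t) (secDir s a) (secDir s b) ↔
      0 ≤ Real.cos a * (x 1 - s * x 0 - t) - Real.sin a * (x 0 - c) ∧
      0 ≤ Real.sin b * (x 0 - c) - Real.cos b * (x 1 - s * x 0 - t) := by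
  have hpos : 0 < Real.sin (b - a) :=
    Real.sin_pos_of_pos_of_lt_pi (by linarith) (by linarith [Real.pi_pos])
  have hsin := Real.sin_sub b a
  constructor
  · rintro ⟨l, m, hl, hm, hx⟩
    obtain ⟨h0, h1⟩ := of_eq_apex_add c s t l a m b x hx
    rw [h0, h1]
    constructor
    · have := mul_nonneg hm hpos.le
      rw [hsin] at this
      linarith
    · have := mul_nonneg hl hpos.le
      rw [hsin] at this
      linarith
  · rintro ⟨h1, h2⟩
    refine ⟨(Real.sin b * (x 0 - c) - Real.cos b * (x 1 - s * x 0 - t)) / Real.sin (b - a),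
      (Real.cos a * (x 1 - s * x 0 - t) - Real.sin a * (x 0 - c)) / Real.sin (b - a),
      div_nonneg h2 hpos.le, div_nonneg h1 hpos.le, eq_apex_add _ _ _ _ _ _ _ _ ?_ ?_⟩
    · field_simp
      rw [hsin]; ring
    · field_simp
      rw [hsin]; ring

lemma interior_sector_subset (c s t a b : ℝ) (hab : a < b) (hab' : b - a ≤ Real.pi / 2)
    (x : Fin 2 → ℝ) :
    x ∈ interior (Sector (secApex c s t) (secDir s a) (secDir s b)) ↔
      0 < Real.cos a * (x 1 - s * x 0 - t) - Real.sin a * (x 0 - c) ∧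
      0 < Real.sin b * (x 0 - c) - Real.cos b * (x 1 - s * x 0 - t) := by
  constructor
  · intro hx
    have hmove : ∀ w : Fin 2 → ℝ, ∃ ε : ℝ, 0 < ε ∧
        x + ε • w ∈ Sector (secApex c s t) (secDir s a) (secDir s b) := by
      intro w
      have hcont : Continuous fun ε : ℝ => x + ε • w := by fun_prop
      have hmem : (fun ε : ℝ => x + ε • w) ⁻¹'
          (Sector (secApex c s t) (secDir s a) (secDir s b)) ∈ nhds (0 : ℝ) := by
        apply hcont.continuousAt.preimage_mem_nhds
        simpa using mem_interior_iff_mem_nhds.1 hx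
      have h2 : ∀ᶠ ε in nhdsWithin (0 : ℝ) (Set.Ioi 0),
        x + ε • w ∈ Sector (secApex c s t) (secDir s a) (secDir s b) :=
        mem_nhdsWithin_of_mem_nhds hmem
      obtain ⟨ε, h, h'⟩ := (h2.and self_mem_nhdsWithin).exists
      exact ⟨ε, h', h⟩
    constructor
    · obtain ⟨ε, hε, h⟩ := hmove ![Real.sin a, s * Real.sin a - Real.cos a]
      have := ((mem_sector_iff c s t a b hab hab' _).1 h).1
      simp at this
      nlinarith [Real.sin_sq_add_cos_sq a]
    · obtain ⟨ε, hε, h⟩ := hmove ![-Real.sin b, -s * Real.sin b + Real.cos b]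
      have := ((mem_sector_iff c s t a b hab hab' _).1 h).2
      simp at this
      nlinarith [Real.sin_sq_add_cos_sq b]
  · intro hx
    rw [mem_interior]
    refine ⟨{x | 0 < Real.cos a * (x 1 - s * x 0 - t) - Real.sin a * (x 0 - c) ∧
      0 < Real.sin b * (x 0 - c) - Real.cos b * (x 1 - s * x 0 - t)}, ?_, ?_, hx⟩
    · intro y hy
      exact (mem_sector_iff c s t a b hab hab' y).2 ⟨hy.1.le, hy.2.le⟩
    · apply IsOpen.and
      · exact isOpen_lt continuous_const (by fun_prop)
      · exact isOpen_lt continuous_const (by fun_prop)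

lemma forms_polar (c s t a b : ℝ) (x : Fin 2 → ℝ) :
    Real.cos a * (x 1 - s * x 0 - t) - Real.sin a * (x 0 - c) =
      ‖secZ c s t x‖ * Real.sin ((secZ c s t x).arg - a) ∧
    Real.sin b * (x 0 - c) - Real.cos b * (x 1 - s * x 0 - t) =
      ‖secZ c s t x‖ * Real.sin (b - (secZ c s t x).arg) := by
  obtain ⟨h0, h1⟩ := secZ_polar c s t x
  rw [Real.sin_sub, Real.sin_sub]
  constructor
  · linear_combination Real.cos a * h1 - Real.sin a * h0
  · linear_combination Real.sin b * h0 - Real.cos b * h1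

lemma interior_imp_arg (c s t a b : ℝ) (hab : a < b) (hab' : b - a ≤ Real.pi / 2)
    (ha : -Real.pi ≤ a) (hb : b ≤ Real.pi) (x : Fin 2 → ℝ)
    (hx : x ∈ interior (Sector (secApex c s t) (secDir s a) (secDir s b))) :
    a < (secZ c s t x).arg ∧ (secZ c s t x).arg < b := by
  rw [interior_sector_subset c s t a b hab hab'] at hx
  obtain ⟨e1, e2⟩ := forms_polar c s t a b x
  rw [e1, e2] at hx
  have hp := Real.pi_pos
  have h1 := Complex.neg_pi_lt_arg (secZ c s t x)
  have h2 := Complex.arg_le_pi (secZ c s t x)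
  generalize (secZ c s t x).arg = φ at *
  have s1 := pos_of_mul_pos_right hx.1 (norm_nonneg _)
  have s2 := pos_of_mul_pos_right hx.2 (norm_nonneg _)
  have hφa : a < φ := by
    by_contra hcon
    push Not at hcon
    by_cases h : -Real.pi ≤ φ - a
    · linarith [Real.sin_nonpos_of_nonpos_of_neg_pi_le (x := φ - a) (by linarith) h]
    · have h3 : 0 ≤ Real.sin (b - φ - Real.pi) :=
        Real.sin_nonneg_of_nonneg_of_le_pi (by linarith) (by linarith)
      rw [Real.sin_sub_pi] at h3
      linarith
  refine ⟨hφa, ?_⟩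
  by_contra hcon
  push Not at hcon
  by_cases h : -Real.pi ≤ b - φ
  · linarith [Real.sin_nonpos_of_nonpos_of_neg_pi_le (x := b - φ) (by linarith) h]
  · have h3 : 0 ≤ Real.sin (φ - a - Real.pi) :=
      Real.sin_nonneg_of_nonneg_of_le_pi (by linarith) (by linarith)
    rw [Real.sin_sub_pi] at h3
    linarith

lemma interior_of_arg (c s t a b : ℝ) (hab : a < b) (hab' : b - a ≤ Real.pi / 2)
    (x : Fin 2 → ℝ) (hz : secZ c s t x ≠ 0)
    (h1 : a < (secZ c s t x).arg) (h2 : (secZ c s t x).arg < b) :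
    x ∈ interior (Sector (secApex c s t) (secDir s a) (secDir s b)) := by
  rw [interior_sector_subset c s t a b hab hab']
  obtain ⟨e1, e2⟩ := forms_polar c s t a b x
  rw [e1, e2]
  have hp := Real.pi_pos
  exact ⟨mul_pos (norm_pos_iff.2 hz)
      (Real.sin_pos_of_pos_of_lt_pi (by linarith) (by linarith)),
    mul_pos (norm_pos_iff.2 hz) (Real.sin_pos_of_pos_of_lt_pi (by linarith) (by linarith))⟩

lemma sector_of_arg (c s t a b : ℝ) (hab : a < b) (hab' : b - a ≤ Real.pi / 2)
    (x : Fin 2 → ℝ)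
    (h1 : a ≤ (secZ c s t x).arg) (h2 : (secZ c s t x).arg ≤ b) :
    x ∈ Sector (secApex c s t) (secDir s a) (secDir s b) := by
  rw [mem_sector_iff c s t a b hab hab']
  obtain ⟨e1, e2⟩ := forms_polar c s t a b x
  rw [e1, e2]
  have hp := Real.pi_pos
  exact ⟨mul_nonneg (norm_nonneg _)
      (Real.sin_nonneg_of_nonneg_of_le_pi (by linarith) (by linarith)),
    mul_nonneg (norm_nonneg _)
      (Real.sin_nonneg_of_nonneg_of_le_pi (by linarith) (by linarith))⟩

/-- The linear functional used for the half-plane. -/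
noncomputable def secForm (s m : ℝ) : (Fin 2 → ℝ) →ₗ[ℝ] ℝ :=
  (-(Real.cos m)) • LinearMap.proj 0 +
    (-(Real.sin m)) • (LinearMap.proj 1 - s • LinearMap.proj 0)

lemma secForm_dir (s m θ : ℝ) : secForm s m (secDir s θ) = - Real.cos (θ - m) := by
  simp [secForm, secDir, Real.cos_sub]; ring

lemma secForm_le (c s t m a b : ℝ) (ha : 0 ≤ Real.cos (a - m)) (hb : 0 ≤ Real.cos (b - m))
    (x : Fin 2 → ℝ) (hx : x ∈ Sector (secApex c s t) (secDir s a) (secDir s b)) :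
    secForm s m x ≤ secForm s m (secApex c s t) := by
  obtain ⟨l, k, hl, hk, rfl⟩ := hx
  simp only [map_add, map_smul, secForm_dir, smul_eq_mul]
  nlinarith [mul_nonneg hl ha, mul_nonneg hk hb]

/-- Everything from a chain of angles. -/
lemma sectors_of_chain {d n : ℕ} (hn : 4 ≤ n) (S : Finset (Fin 2 → ℝ)) (c s t : ℝ)
    (hX : ∀ x ∈ S, x 0 - c ≠ 0) (hY : ∀ x ∈ S, x 1 - s * x 0 - t ≠ 0)
    (hch : SecChain (S.image (fun x => (secZ c s t x).arg)) (d + 1) n (-Real.pi) Real.pi) :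
    ∃ (p : Fin 2 → ℝ) (u : Fin n → Fin 2 → ℝ),
      (∀ i, u i ≠ 0) ∧
      (∀ x ∈ S, ∀ i, ∀ a : ℝ, 0 ≤ a → x ≠ p + a • u i) ∧
      (⋃ i : Fin n, Sector p (u i) (u (finRotate n i))) = Set.univ ∧
      (∀ i j : Fin n, i ≠ j →
        interior (Sector p (u i) (u (finRotate n i))) ∩
          interior (Sector p (u j) (u (finRotate n j))) = ∅) ∧
      (∀ i : Fin n,
        d + 1 ≤ (S.filter
          (fun x => x ∈ interior (Sector p (u i) (u (finRotate n i))))).card) ∧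
      (∀ i : Fin n, ∃ f : (Fin 2 → ℝ) →ₗ[ℝ] ℝ, f ≠ 0 ∧
        ∀ x ∈ Sector p (u i) (u (finRotate n i)) ∪
            Sector p (u (finRotate n i)) (u (finRotate n (finRotate n i))),
          f x ≤ f p) := by
  obtain ⟨θ, h0, hnn, hs, hnot⟩ := hch
  have hrot : ∀ i : Fin n, secDir s (θ (finRotate n i)) = secDir s (θ (i + 1)) := by
    intro i
    obtain ⟨k, rfl⟩ : ∃ k, n = k + 1 := ⟨n - 1, by omega⟩
    by_cases hi : i = Fin.last k
    · subst hi
      rw [finRotate_last]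
      simp only [Fin.val_zero, Fin.val_last, h0, hnn]
      simp [secDir]
    · have : (i : ℕ) < k := by
        rcases lt_or_eq_of_le (Nat.lt_succ_iff.1 i.2) with h | h
        · exact h
        · exact absurd (Fin.ext h) hi
      rw [coe_finRotate_of_ne_last hi]
  have hmono : ∀ i j, i ≤ j → j ≤ n → θ i ≤ θ j := by
    intro i j hij
    induction j, hij using Nat.le_induction with
    | base => intro _; exact le_rfl
    | succ j hj ih => intro hjn; exact (ih (by omega)).trans (hs j (by omega)).1.le
  have hlow : ∀ i ≤ n, -Real.pi ≤ θ i := fun i hi => by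
    rw [← h0]; exact hmono 0 i (by omega) hi
  have hhigh : ∀ i ≤ n, θ i ≤ Real.pi := fun i hi => by
    rw [← hnn]; exact hmono i n hi le_rfl
  have hz : ∀ x ∈ S, secZ c s t x ≠ 0 := by
    intro x hx h
    exact hX x hx (by simpa [secZ] using congrArg Complex.re h)
  have hcos : ∀ i : Fin n, 0 ≤ Real.cos (θ i - θ (i + 1)) := by
    intro i
    obtain ⟨g1, g2, _⟩ := hs i i.2
    exact Real.cos_nonneg_of_neg_pi_div_two_le_of_le (by linarith) (by linarith [Real.pi_pos])
  refine ⟨secApex c s t, fun i => secDir s (θ i), ?_, ?_, ?_, ?_, ?_, ?_⟩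
  · intro i h
    have e0 := congrFun h 0
    have e1 := congrFun h 1
    simp [secDir] at e0 e1
    rw [e0] at e1
    have := Real.sin_sq_add_cos_sq (θ i)
    rw [e0] at this
    simp at e1
    rw [e1] at this
    norm_num at this
  · intro x hx i a ha h
    have h' : x = secApex c s t + a • secDir s (θ i) + (0 : ℝ) • secDir s 0 := by simpa using h
    obtain ⟨e0, e1⟩ := of_eq_apex_add c s t a (θ i) 0 0 x h'
    have ha' : 0 < a := by
      rcases lt_or_eq_of_le ha with h | h
      · exact h
      · exfalso; apply hX x hx; rw [e0, ← h]; simp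
    rcases lt_or_eq_of_le (hlow i i.2.le) with hl | hl
    · apply hnot i i.2.le
      refine Finset.mem_image.2 ⟨x, hx, ?_⟩
      have hze : secZ c s t x = (a : ℂ) * (Complex.cos (θ i) + Complex.sin (θ i) * Complex.I) := by
        apply Complex.ext
        · simp [secZ, e0, Complex.cos_ofReal_re]
        · simp [secZ, e1, Complex.sin_ofReal_re]
      rw [hze]
      exact Complex.arg_mul_cos_add_sin_mul_I ha' ⟨hl, hhigh i i.2.le⟩
    · apply hY x hx
      rw [e1, ← hl]; simp
  · rw [Set.eq_univ_iff_forall]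
    intro x
    have hex : ∃ k, (secZ c s t x).arg ≤ θ k ∧ k ≤ n :=
      ⟨n, by rw [hnn]; exact Complex.arg_le_pi _, le_rfl⟩
    obtain ⟨hk1, hk2⟩ := Nat.find_spec hex
    have hk0 : Nat.find hex ≠ 0 := by
      intro h
      rw [h, h0] at hk1
      linarith [Complex.neg_pi_lt_arg (secZ c s t x)]
    obtain ⟨j, hj⟩ := Nat.exists_eq_succ_of_ne_zero hk0
    have hjl : ¬ ((secZ c s t x).arg ≤ θ j ∧ j ≤ n) := Nat.find_min hex (by omega)
    rw [hj] at hk1 hk2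
    have hjl' : θ j ≤ (secZ c s t x).arg := by
      by_contra hcon
      exact hjl ⟨(not_le.1 hcon).le, by omega⟩
    refine Set.mem_iUnion.2 ⟨⟨j, by omega⟩, ?_⟩
    simp only [hrot]
    obtain ⟨g1, g2, _⟩ := hs j (by omega)
    exact sector_of_arg c s t _ _ g1 g2 x hjl' hk1
  · intro i j hij
    simp only [hrot]
    rw [Set.eq_empty_iff_forall_notMem]
    rintro x ⟨hx1, hx2⟩
    obtain ⟨g1, g2, _⟩ := hs i i.2
    obtain ⟨k1, k2, _⟩ := hs j j.2
    obtain ⟨a1, a2⟩ := interior_imp_arg c s t _ _ g1 g2 (hlow _ i.2.le) (hhigh _ i.2) x hx1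
    obtain ⟨b1, b2⟩ := interior_imp_arg c s t _ _ k1 k2 (hlow _ j.2.le) (hhigh _ j.2) x hx2
    rcases lt_or_gt_of_ne hij with h | h
    · have := hmono (i + 1) j h j.2.le
      linarith
    · have := hmono (j + 1) i h i.2.le
      linarith
  · intro i
    simp only [hrot]
    obtain ⟨g1, g2, g3⟩ := hs i i.2
    refine g3.trans ?_
    refine le_trans (Finset.card_le_card ?_)
      (Finset.card_image_le (f := fun x => (secZ c s t x).arg))
    intro φ hφ
    obtain ⟨hφ1, hφ2, hφ3⟩ := Finset.mem_filter.1 hφ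
    obtain ⟨x, hx, rfl⟩ := Finset.mem_image.1 hφ1
    exact Finset.mem_image.2 ⟨x, Finset.mem_filter.2 ⟨hx,
      interior_of_arg c s t _ _ g1 g2 x (hz x hx) hφ2 hφ3⟩, rfl⟩
  · intro i
    have hform : ∀ m, secForm s m (secDir s m) = -1 := by
      intro m; rw [secForm_dir]; simp
    refine ⟨secForm s (θ (finRotate n i)), ?_, ?_⟩
    · intro h
      have := hform (θ (finRotate n i))
      rw [h] at this
      norm_num at this
    · have hc1 : ∀ j : Fin n, 0 ≤ Real.cos (θ j - θ (finRotate n j)) := by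
        intro j
        have e : secForm s (θ j) (secDir s (θ (finRotate n j))) =
          secForm s (θ j) (secDir s (θ (j + 1))) := by rw [hrot]
        rw [secForm_dir, secForm_dir] at e
        rw [← Real.cos_neg, neg_sub, neg_injective e, ← Real.cos_neg, neg_sub]
        exact hcos j
      rintro x (hx | hx)
      · exact secForm_le c s t _ _ _ (hc1 i) (by simp) x hx
      · refine secForm_le c s t _ _ _ (by simp) ?_ x hx
        rw [← Real.cos_neg, neg_sub]
        exact hc1 _

lemma arg_quadrants (z : ℂ) :
    ((z.re < 0 ∧ z.im < 0) → (-Real.pi < z.arg ∧ z.arg < -(Real.pi / 2))) ∧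
    ((0 < z.re ∧ z.im < 0) → (-(Real.pi / 2) < z.arg ∧ z.arg < 0)) ∧
    ((0 < z.re ∧ 0 < z.im) → (0 < z.arg ∧ z.arg < Real.pi / 2)) ∧
    ((z.re < 0 ∧ 0 < z.im) → (Real.pi / 2 < z.arg ∧ z.arg < Real.pi)) := by
  have h1 := Complex.neg_pi_lt_arg z
  have h2 := Complex.arg_le_pi z
  have hp := Real.pi_pos
  have hre := Complex.norm_mul_cos_arg z
  have him := Complex.norm_mul_sin_arg z
  have hr := norm_nonneg z
  have neg : ∀ y : ℝ, ‖z‖ * y < 0 → y < 0 := by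
    intro y hy; by_contra h; push Not at h; nlinarith [mul_nonneg hr h]
  have pos : ∀ y : ℝ, 0 < ‖z‖ * y → 0 < y := fun y hy => pos_of_mul_pos_right hy hr
  rw [← hre, ← him]
  generalize z.arg = φ at *
  have sneg : Real.sin φ < 0 → φ < 0 := by
    intro h; by_contra h'; push Not at h'
    linarith [Real.sin_nonneg_of_nonneg_of_le_pi h' h2]
  have spos : 0 < Real.sin φ → 0 < φ ∧ φ < Real.pi := by
    intro h
    constructor
    · by_contra h'; push Not at h'
      linarith [Real.sin_nonpos_of_nonpos_of_neg_pi_le h' h1.le]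
    · refine lt_of_le_of_ne h2 ?_
      rintro rfl
      simp at h
  have cneg : Real.cos φ < 0 → φ < -(Real.pi / 2) ∨ Real.pi / 2 < φ := by
    intro h; by_contra h'; push Not at h'
    linarith [Real.cos_nonneg_of_neg_pi_div_two_le_of_le h'.1 h'.2]
  have cpos : 0 < Real.cos φ → -(Real.pi / 2) < φ ∧ φ < Real.pi / 2 := by
    intro h
    constructor
    · by_contra h'; push Not at h'
      have := Real.cos_nonpos_of_pi_div_two_le_of_le (x := -φ) (by linarith) (by linarith)
      rw [Real.cos_neg] at this
      linarith
    · by_contra h'; push Not at h'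
      linarith [Real.cos_nonpos_of_pi_div_two_le_of_le (x := φ) (by linarith) (by linarith)]
  refine ⟨?_, ?_, ?_, ?_⟩
  · rintro ⟨a, b⟩
    have := sneg (neg _ b)
    rcases cneg (neg _ a) with h | h
    · exact ⟨h1, h⟩
    · linarith
  · rintro ⟨a, b⟩
    exact ⟨(cpos (pos _ a)).1, sneg (neg _ b)⟩
  · rintro ⟨a, b⟩
    exact ⟨(spos (pos _ b)).1, (cpos (pos _ a)).2⟩
  · rintro ⟨a, b⟩
    have := spos (pos _ b)
    rcases cneg (neg _ a) with h | h
    · linarith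
    · exact ⟨h, this.2⟩

lemma main_chain {d n : ℕ} (hn : 4 ≤ n) (S : Finset (Fin 2 → ℝ))
    (hcard : n * d + n + 4 * d ≤ S.card) (c s t : ℝ)
    (hX : ∀ x ∈ S, x 0 - c ≠ 0) (hY : ∀ x ∈ S, x 1 - s * x 0 - t ≠ 0)
    (hdet : ∀ x ∈ S, ∀ y ∈ S, x ≠ y →
        (x 0 - c) * (y 1 - s * y 0 - t) ≠ (y 0 - c) * (x 1 - s * x 0 - t))
    (q1 : d + 1 ≤ (S.filter (fun x => x 0 - c < 0 ∧ x 1 - s * x 0 - t < 0)).card)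
    (q2 : d + 1 ≤ (S.filter (fun x => 0 < x 0 - c ∧ x 1 - s * x 0 - t < 0)).card)
    (q3 : d + 1 ≤ (S.filter (fun x => 0 < x 0 - c ∧ 0 < x 1 - s * x 0 - t)).card)
    (q4 : d + 1 ≤ (S.filter (fun x => x 0 - c < 0 ∧ 0 < x 1 - s * x 0 - t)).card) :
    SecChain (S.image (fun x => (secZ c s t x).arg)) (d + 1) n (-Real.pi) Real.pi := by
  have hp := Real.pi_pos
  set Φ := S.image (fun x => (secZ c s t x).arg) with hΦ
  have hinj : Set.InjOn (fun x => (secZ c s t x).arg) (S : Set (Fin 2 → ℝ)) := by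
    intro x hx y hy hxy
    by_contra hne
    apply hdet x hx y hy hne
    obtain ⟨a, b⟩ := secZ_polar c s t x
    obtain ⟨a', b'⟩ := secZ_polar c s t y
    simp only at hxy
    rw [← hxy] at a' b'
    rw [a, b, a', b']; ring
  have hQ : ∀ x ∈ S, _ := fun x _ => arg_quadrants (secZ c s t x)
  have hcnt : ∀ (P : (Fin 2 → ℝ) → Prop) [DecidablePred P] (a b : ℝ),
      (∀ x ∈ S, P x → a < (secZ c s t x).arg ∧ (secZ c s t x).arg < b) →
      (S.filter P).card ≤ (Φ.filter (fun y => a < y ∧ y < b)).card := by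
    intro P _ a b h
    rw [← Finset.card_image_of_injOn (s := S.filter P) (hinj.mono (by
      intro x hx; exact (Finset.mem_filter.1 hx).1))]
    refine Finset.card_le_card ?_
    intro y hy
    obtain ⟨x, hx, rfl⟩ := Finset.mem_image.1 hy
    obtain ⟨hxS, hxP⟩ := Finset.mem_filter.1 hx
    exact Finset.mem_filter.2 ⟨Finset.mem_image_of_mem _ hxS, h x hxS hxP⟩
  have n1 := hcnt (fun x => x 0 - c < 0 ∧ x 1 - s * x 0 - t < 0) _ _
    fun x hx h => (hQ x hx).1 h
  have n2 := hcnt (fun x => 0 < x 0 - c ∧ x 1 - s * x 0 - t < 0) _ _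
    fun x hx h => (hQ x hx).2.1 h
  have n3 := hcnt (fun x => 0 < x 0 - c ∧ 0 < x 1 - s * x 0 - t) _ _
    fun x hx h => (hQ x hx).2.2.1 h
  have n4 := hcnt (fun x => x 0 - c < 0 ∧ 0 < x 1 - s * x 0 - t) _ _
    fun x hx h => (hQ x hx).2.2.2 h
  have hsum : S.card ≤ (S.filter (fun x => x 0 - c < 0 ∧ x 1 - s * x 0 - t < 0)).card +
     (S.filter (fun x => 0 < x 0 - c ∧ x 1 - s * x 0 - t < 0)).card +
     (S.filter (fun x => 0 < x 0 - c ∧ 0 < x 1 - s * x 0 - t)).card +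
     (S.filter (fun x => x 0 - c < 0 ∧ 0 < x 1 - s * x 0 - t)).card := by
    refine le_trans (Finset.card_le_card (t :=
      ((S.filter (fun x => x 0 - c < 0 ∧ x 1 - s * x 0 - t < 0)) ∪
      (S.filter (fun x => 0 < x 0 - c ∧ x 1 - s * x 0 - t < 0)) ∪
      (S.filter (fun x => 0 < x 0 - c ∧ 0 < x 1 - s * x 0 - t)) ∪
      (S.filter (fun x => x 0 - c < 0 ∧ 0 < x 1 - s * x 0 - t)))) ?_) ?_
    · intro x hx
      simp only [Finset.mem_union, Finset.mem_filter]
      rcases lt_or_gt_of_ne (hX x hx) with h | h <;>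
      rcases lt_or_gt_of_ne (hY x hx) with h' | h' <;> simp [hx, h, h']
    · refine (Finset.card_union_le _ _).trans (Nat.add_le_add_right ?_ _)
      refine (Finset.card_union_le _ _).trans (Nat.add_le_add_right ?_ _)
      exact Finset.card_union_le _ _
  obtain ⟨k1, k2, k3, k4, hk, c1, c2, c3, c4⟩ :=
    choose_counts d n _ _ _ _ hn q1 q2 q3 q4 (hcard.trans hsum)
  have hnot : ∀ a : ℝ, (a = -Real.pi ∨ a = -(Real.pi/2) ∨ a = 0 ∨ a = Real.pi / 2 ∨
      a = Real.pi) → a ∉ Φ := by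
    intro a ha hmem
    obtain ⟨x, hx, rfl⟩ := Finset.mem_image.1 hmem
    obtain ⟨r1, r2, r3, r4⟩ := hQ x hx
    have : (secZ c s t x).re ≠ 0 := hX x hx
    have : (secZ c s t x).im ≠ 0 := hY x hx
    rcases lt_or_gt_of_ne (hX x hx) with h | h <;>
    rcases lt_or_gt_of_ne (hY x hx) with h' | h'
    · have := r1 ⟨h, h'⟩
      rcases ha with e | e | e | e | e <;> linarith
    · have := r4 ⟨h, h'⟩
      rcases ha with e | e | e | e | e <;> linarith
    · have := r2 ⟨h, h'⟩
      rcases ha with e | e | e | e | e <;> linarith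
    · have := r3 ⟨h, h'⟩
      rcases ha with e | e | e | e | e <;> linarith
  have C1 := secChain_exists Φ (d + 1) (by omega) (-(Real.pi / 2)) (hnot _ (by simp)) k1
    (-Real.pi) (hnot _ (by simp)) (by linarith) (by linarith) (c1.trans n1)
  have C2 := secChain_exists Φ (d + 1) (by omega) 0 (hnot _ (by simp)) k2
    (-(Real.pi / 2)) (hnot _ (by simp)) (by linarith) (by linarith) (c2.trans n2)
  have C3 := secChain_exists Φ (d + 1) (by omega) (Real.pi / 2) (hnot _ (by simp)) k3
    0 (hnot _ (by simp)) (by linarith) (by linarith) (c3.trans n3)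
  have C4 := secChain_exists Φ (d + 1) (by omega) Real.pi (hnot _ (by simp)) k4
    (Real.pi / 2) (hnot _ (by simp)) (by linarith) (by linarith) (c4.trans n4)
  have := secChain_append (secChain_append (secChain_append C1 C2) C3) C4
  rwa [hk] at this

/-- For `n ≥ 4`, `d ≥ 1`, and a finite planar set `S` in general position with
`|S| ≥ nd + n + 4d`, there is an apex `p` and `n` closed sectors around `p` (the `i`-th sector
spanned by consecutive rays `u i`, `u (i+1)`, cyclically) partitioning the plane such that
(i) each sector contains at least `d+1` points of `S` in its interior, and (ii) the union of
any two adjacent sectors lies in a closed half-plane through `p`. -/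
theorem sector_subdivision
    {d n : ℕ} (hd : 1 ≤ d) (hn : 4 ≤ n)
    (S : Finset (Fin 2 → ℝ)) (hcard : n * d + n + 4 * d ≤ S.card)
    -- general position: no three points collinear
    (hgen : ∀ x ∈ S, ∀ y ∈ S, ∀ z ∈ S, x ≠ y → y ≠ z → x ≠ z →
      ¬ Collinear ℝ ({x, y, z} : Set (Fin 2 → ℝ))) :
    ∃ (p : Fin 2 → ℝ) (u : Fin n → Fin 2 → ℝ),
      (∀ i, u i ≠ 0) ∧
      -- no point of S equals the apex or lies on a boundary ray
      (∀ x ∈ S, ∀ i, ∀ a : ℝ, 0 ≤ a → x ≠ p + a • u i) ∧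
      -- the sectors cover the plane
      (⋃ i : Fin n, Sector p (u i) (u (finRotate n i))) = Set.univ ∧
      -- distinct sectors have disjoint interiors
      (∀ i j : Fin n, i ≠ j →
        interior (Sector p (u i) (u (finRotate n i))) ∩
          interior (Sector p (u j) (u (finRotate n j))) = ∅) ∧
      -- (i) each sector has at least d+1 points of S in its interior
      (∀ i : Fin n,
        d + 1 ≤ (S.filter
          (fun x => x ∈ interior (Sector p (u i) (u (finRotate n i))))).card) ∧
      -- (ii) adjacent sectors lie in a common closed half-plane through p
      (∀ i : Fin n, ∃ f : (Fin 2 → ℝ) →ₗ[ℝ] ℝ, f ≠ 0 ∧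
        ∀ x ∈ Sector p (u i) (u (finRotate n i)) ∪
            Sector p (u (finRotate n i)) (u (finRotate n (finRotate n i))),
          f x ≤ f p) := by
  have h8 : 8 * d + 4 ≤ S.card := by
    have : 4 * d ≤ n * d := Nat.mul_le_mul_right d hn
    omega
  obtain ⟨c, s, t, hX, hY, hdet, q1, q2, q3, q4⟩ := exists_cross hd S h8 hgen
  exact sectors_of_chain hn S c s t hX hY
    (main_chain hn S hcard c s t hX hY hdet q1 q2 q3 q4)
end

section
/- For the path P₄ on 4 vertices in the plane: there exists a set of 8 points in general position in ℝ² admitting no partition into 4 parts whose nerve is isomorphic to P₄; consequently Tv(P₄, 2) ≥ 9. -/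
namespace P4Aux

/-- Separating-line certificates: `(i, j, a, b, c)`. -/
def sepData : List (Fin 4 × Fin 4 × ℤ × ℤ × ℤ) := [
  (0, 1, 2300000, 160000, -549480001),
  (1, 2, 2300000, 160000, -549480001),
  (2, 3, 2300000, 160000, -549480001),
  (2, 3, -2300000, -160000, 549480001),
  (0, 1, 9998, 200000, -22539712),
  (0, 1, -919998, -840000, 229879608),
  (2, 3, -1320002, -720000, 323520404),
  (0, 1, -1320002, -720000, 323520404),
  (1, 2, 370000, 1070000, -101970001),
  (0, 1, 400002, -120000, -49000320),
  (0, 1, 549998, -480000, -5459604),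
  (1, 2, 1369998, -880000, -90299644),
  (2, 3, 549998, -480000, -5459604),
  (0, 1, 919998, 840000, -229879608),
  (2, 3, -919998, -840000, 229879608),
  (2, 3, -979998, 560000, 81479612),
  (0, 1, -369998, -1070000, 101969631),
  (0, 1, -1380000, 680000, 141119999),
  (2, 3, -389998, 320000, 18339700),
  (2, 3, 950002, -350000, -106950297),
  (0, 1, -400002, 120000, 49000320),
  (0, 1, 1320002, 720000, -323520404),
  (2, 3, -9998, -200000, 22539712),
  (0, 1, 979998, -560000, -81479612),
  (0, 1, -370002, -1070000, 101970369),
  (1, 2, -370000, -1070000, 101970001),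
  (1, 2, -1320002, -720000, 323520404),
  (2, 3, -1930000, 910000, 207329999),
  (2, 3, 559998, -30000, -71859735),
  (2, 3, -550002, 230000, 60550285),
  (2, 3, 1370000, -880000, -90299999),
  (2, 3, -400002, 120000, 49000320),
  (0, 1, -559998, 30000, 71859735),
  (0, 1, 550002, -230000, -60550285),
  (1, 2, -389998, 320000, 18339700),
  (0, 1, 1930000, -910000, -207329999),
  (2, 3, 1320002, 720000, -323520404),
  (1, 2, -979998, 560000, 81479612),
  (2, 3, 1930000, -910000, -207329999),
  (2, 3, 369998, 1070000, -101969631),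
  (0, 1, -549998, 480000, 5459604),
  (0, 1, -1930000, 910000, 207329999),
  (1, 2, 559998, -30000, -71859735),
  (2, 3, 370002, 1070000, -101970369),
  (2, 3, 979998, -560000, -81479612),
  (0, 1, -1370000, 880000, 90299999),
  (1, 2, 400002, -120000, -49000320),
  (0, 1, 389998, -320000, -18339700),
  (1, 2, -559998, 30000, 71859735),
  (0, 1, -979998, 560000, 81479612),
  (1, 2, -9998, -200000, 22539712),
  (2, 3, 389998, -320000, -18339700),
  (0, 1, -389998, 320000, 18339700),
  (1, 2, 389998, -320000, -18339700),
  (2, 3, 9998, 200000, -22539712),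
  (1, 2, 550002, -230000, -60550285),
  (1, 2, 979998, -560000, -81479612),
  (1, 2, -1930000, 910000, 207329999),
  (1, 2, 1930000, -910000, -207329999),
  (1, 2, 1320002, 720000, -323520404),
  (1, 2, 919998, 840000, -229879608),
  (1, 2, 9998, 200000, -22539712),
  (1, 2, -919998, -840000, 229879608),
  (1, 2, -1370000, 880000, 90299999),
  (0, 1, -9998, -200000, 22539712),
  (1, 2, -400002, 120000, 49000320),
  (1, 2, -550002, 230000, 60550285)]

/-- Radon certificates: `(i, j, w)`. -/
def radData : List (Fin 4 × Fin 4 × List ℤ) := [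
  (3, 1, [-6103, 4517, -22432, 0, 0, 24018, 0, 0]),
  (1, 3, [679, 3650, -8332, 0, 0, 0, 0, 4003]),
  (3, 1, [0, -691, 0, 0, -4127, 6576, 0, -1758]),
  (0, 2, [-16357, 4259, -11920, 0, 0, 0, 24018, 0]),
  (2, 0, [0, 2552, 0, -9017, 0, 0, 4262, 2203]),
  (2, 0, [-16357, 4259, -11920, 0, 0, 0, 24018, 0]),
  (2, 0, [679, 3650, -8332, 0, 0, 0, 0, 4003]),
  (2, 0, [2131, 1887, 0, -6249, 0, 0, 0, 2231]),
  (1, 3, [0, 2552, 0, -9017, 0, 0, 4262, 2203]),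
  (3, 1, [-16357, 4259, -11920, 0, 0, 0, 24018, 0]),
  (1, 3, [2131, 1887, 0, -6249, 0, 0, 0, 2231]),
  (2, 0, [3119, 0, 7548, -10950, 0, 0, 0, 283]),
  (2, 0, [359, 0, 308, 0, -730, 0, 0, 63]),
  (1, 3, [0, 1795, -4384, 0, 679, 0, 0, 1910]),
  (1, 3, [3119, 0, 7548, -10950, 0, 0, 0, 283]),
  (1, 3, [359, 0, 308, 0, -730, 0, 0, 63]),
  (1, 3, [0, 599, 0, -3288, 2131, 0, 0, 558]),
  (2, 0, [0, 1403, 0, 0, -9017, 0, 6576, 1038]),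
  (1, 3, [-6103, 4517, -22432, 0, 0, 24018, 0, 0]),
  (2, 0, [1096, 385, 0, 0, -2083, 0, 0, 602]),
  (1, 3, [1096, 385, 0, 0, -2083, 0, 0, 602]),
  (2, 0, [809, 0, 2884, -4259, 0, 0, 566, 0]),
  (1, 3, [809, 0, 2884, -4259, 0, 0, 566, 0]),
  (0, 2, [-1994, 0, 1736, 0, 0, -4259, 4517, 0]),
  (3, 1, [-1994, 0, 1736, 0, 0, -4259, 4517, 0]),
  (2, 0, [599, 0, 0, 1155, -1887, 0, 0, 133]),
  (1, 3, [599, 0, 0, 1155, -1887, 0, 0, 133]),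
  (2, 0, [304, 0, 0, 2763, 0, -3774, 0, 707]),
  (1, 3, [304, 0, 0, 2763, 0, -3774, 0, 707]),
  (2, 0, [2552, 0, 0, 501, 0, 0, -3774, 721]),
  (1, 3, [2552, 0, 0, 501, 0, 0, -3774, 721]),
  (2, 0, [-691, 0, 0, 0, 2763, -2310, 0, 238]),
  (3, 1, [-691, 0, 0, 0, 2763, -2310, 0, 238]),
  (1, 3, [0, 745, 4152, 0, -16357, 0, 11460, 0]),
  (2, 0, [0, 1795, -4384, 0, 679, 0, 0, 1910]),
  (2, 0, [0, 599, 0, -3288, 2131, 0, 0, 558]),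
  (2, 0, [0, 304, 0, -4127, 0, 4262, 0, -439]),
  (1, 3, [0, 304, 0, -4127, 0, 4262, 0, -439]),
  (1, 3, [0, 1403, 0, 0, -9017, 0, 6576, 1038]),
  (0, 2, [-6103, 4517, -22432, 0, 0, 24018, 0, 0]),
  (2, 0, [879, 119, 0, 0, -2804, 1806, 0, 0]),
  (2, 0, [-1531, 217, 0, 0, 0, -1490, 2804, 0]),
  (1, 3, [-1531, 217, 0, 0, 0, -1490, 2804, 0]),
  (2, 0, [0, 745, 4152, 0, -16357, 0, 11460, 0])]

/-- Bit `e` of entry `(k, j)`: certificate `e` allows point `k` to have colour `j`. -/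
def tab : List (ℕ × ℕ × ℕ × ℕ) := [
  (1702771699025296538354187045239646,
   1378781289011972500915880244270573,
   1621430760651735207152207102193339,
   2026973378714588497870342451331063),
  (82396987691402532619234199854958,
   712419540501753622667404645431517,
   1803866599549635178441577848338363,
   1267349351320699807735546884087),
  (1215673473151781449248626567863790,
   1214405210896594952201575905360477,
   2592341097438201296627774166104059,
   1213139449772044374400065953836983),
  (2575553427525689724757939190562254,
   2560549284440949755699889538325373,
   2560445297477720696800831916947195,
   2580624351366283217917632247754679),
  (2545749243928878103556390380306398,
   1085410714268161688172915259726189,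
   1093333519638639629536366449080059,
   1127887061593458799099583680212919),
  (1753751238827997839945985244978686,
   1368685076533756491892011201067853,
   1520168046635257991884688621565691,
   1996843048463145694538776985939895),
  (282524203727506687029621026651486,
   973313933755969567354129411331053,
   1905036834750707025945059309108923,
   282604669904455937714828196147191),
  (2526432327297390714620994234866158,
   2557064088695617579733064574891613,
   2524318023361621919933509014122491,
   2537207357399330664674493837557687)]

/-- The coordinates of the eight points. -/
def X : Fin 8 → ℤ := ![222, 238, 131, 154, 166, 134, 174, 18]
def Y : Fin 8 → ℤ := ![243, 13, 50, 105, 145, 106, 188, 51]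

/-- The eight points. -/
noncomputable def pt (k : Fin 8) : Fin 2 → ℝ := ![(X k : ℝ), (Y k : ℝ)]

def sel (t : ℕ × ℕ × ℕ × ℕ) (j : Fin 4) : ℕ :=
  match j with
  | 0 => t.1
  | 1 => t.2.1
  | 2 => t.2.2.1
  | 3 => t.2.2.2

def T (k : Fin 8) (j : Fin 4) : ℕ := sel (tab.getD k (0, 0, 0, 0)) j

/-- Every colouring leaves some certificate alive. -/
def srch : List (ℕ × ℕ × ℕ × ℕ) → ℕ → Bool
  | [], z => Nat.ble 1 z
  | t :: ts, z =>
    srch ts (Nat.land z t.1) && srch ts (Nat.land z t.2.1) &&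
      srch ts (Nat.land z t.2.2.1) && srch ts (Nat.land z t.2.2.2)

def fin : List (ℕ × ℕ × ℕ × ℕ) → (ℕ → Fin 4) → ℕ → ℕ → ℕ
  | [], _, _, z => z
  | t :: ts, g, n, z => fin ts g (n + 1) (Nat.land z (sel t (g n)))

theorem srch_sound (ts : List (ℕ × ℕ × ℕ × ℕ)) : ∀ (g : ℕ → Fin 4) (n z : ℕ),
    srch ts z = true → fin ts g n z ≠ 0 := by
  induction ts with
  | nil =>
    intro g n z h
    simp only [srch, Nat.ble_eq] at h
    simp only [fin]
    omega
  | cons t ts ih =>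
    intro g n z h
    simp only [srch, Bool.and_eq_true] at h
    obtain ⟨⟨⟨h0, h1⟩, h2⟩, h3⟩ := h
    simp only [fin]
    apply ih
    generalize g n = j
    fin_cases j <;> simpa [sel]

theorem fin_testBit (ts : List (ℕ × ℕ × ℕ × ℕ)) : ∀ (g : ℕ → Fin 4) (n z e : ℕ),
    (fin ts g n z).testBit e = true → z.testBit e = true ∧
      ∀ i, i < ts.length → (sel (ts.getD i (0, 0, 0, 0)) (g (n + i))).testBit e = true := by
  induction ts with
  | nil =>
    intro g n z e h
    exact ⟨h, fun i hi => by simp at hi⟩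
  | cons t ts ih =>
    intro g n z e h
    obtain ⟨h1, h2⟩ := ih _ _ _ _ h
    have h1' : (z &&& sel t (g n)).testBit e = true := h1
    rw [Nat.testBit_and, Bool.and_eq_true] at h1'
    refine ⟨h1'.1, fun i hi => ?_⟩
    cases i with
    | zero => simpa using h1'.2
    | succ i =>
      have := h2 i (by simpa using hi)
      rw [show n + (i + 1) = n + 1 + i by ring]
      simpa using this

theorem srch_true : srch tab (2 ^ 111 - 1) = true := by decide +kernel

theorem exists_cert (f : Fin 8 → Fin 4) :
    ∃ e < 111, ∀ k, (T k (f k)).testBit e = true := by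
  have h := srch_sound tab (fun n => if h : n < 8 then f ⟨n, h⟩ else 0) 0 _ srch_true
  obtain ⟨e, he⟩ := Nat.exists_testBit_of_ne_zero h
  obtain ⟨h1, h2⟩ := fin_testBit _ _ _ _ _ he
  refine ⟨e, ?_, fun k => ?_⟩
  · rw [Nat.testBit_two_pow_sub_one] at h1
    simpa using h1
  · have := h2 k (by simp [tab])
    simpa [T] using this

def sepC (e : ℕ) : Fin 4 × Fin 4 × ℤ × ℤ × ℤ := sepData.getD e (0, 0, 0, 0, 0)
def radC (e : ℕ) : Fin 4 × Fin 4 × List ℤ := radData.getD e (0, 0, [])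
def wt (e : ℕ) (k : Fin 8) : ℤ := (radC e).2.2.getD k 0

theorem sep_check : ∀ e < 67,
    (((sepC e).1 : ℕ) + 1 = ((sepC e).2.1 : ℕ)) ∧
    ∀ k : Fin 8,
      ((T k (sepC e).1).testBit e = true →
        0 < (sepC e).2.2.1 * X k + (sepC e).2.2.2.1 * Y k + (sepC e).2.2.2.2) ∧
      ((T k (sepC e).2.1).testBit e = true →
        (sepC e).2.2.1 * X k + (sepC e).2.2.2.1 * Y k + (sepC e).2.2.2.2 < 0) := by
  decide +kernel

theorem rad_check : ∀ e < 44,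
    ((radC e).1 ≠ (radC e).2.1 ∧ ((radC e).1 : ℕ) + 1 ≠ ((radC e).2.1 : ℕ) ∧
      ((radC e).2.1 : ℕ) + 1 ≠ ((radC e).1 : ℕ)) ∧
    ∑ k, wt e k = 0 ∧ ∑ k, wt e k * X k = 0 ∧ ∑ k, wt e k * Y k = 0 ∧
    (∃ k, 0 < wt e k) ∧
    ∀ k : Fin 8, ∀ j : Fin 4, (T k j).testBit (67 + e) = true →
      (0 < wt e k → j = (radC e).1) ∧ (wt e k < 0 → j = (radC e).2.1) := by
  decide +kernel

theorem sep_disj (A B : Set (Fin 2 → ℝ)) (a b c : ℝ)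
    (hA : ∀ x ∈ A, 0 < a * x 0 + b * x 1 + c) (hB : ∀ x ∈ B, a * x 0 + b * x 1 + c < 0) :
    ¬ (convexHull ℝ A ∩ convexHull ℝ B).Nonempty := by
  have hlin : IsLinearMap ℝ (fun x : Fin 2 → ℝ => a * x 0 + b * x 1) :=
    ⟨fun x y => by simp; ring, fun r x => by simp; ring⟩
  rintro ⟨x, hxA, hxB⟩
  have h1 := convexHull_min (t := {x : Fin 2 → ℝ | -c < a * x 0 + b * x 1})
    (fun y hy => by have := hA y hy; simp only [Set.mem_setOf_eq]; linarith)
    (convex_halfSpace_gt hlin _) hxA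
  have h2 := convexHull_min (t := {x : Fin 2 → ℝ | a * x 0 + b * x 1 < -c})
    (fun y hy => by have := hB y hy; simp only [Set.mem_setOf_eq]; linarith)
    (convex_halfSpace_lt hlin _) hxB
  simp only [Set.mem_setOf_eq] at h1 h2
  linarith

theorem rad_inter (A B : Set (Fin 2 → ℝ)) (w : Fin 8 → ℝ) (p : Fin 8 → Fin 2 → ℝ)
    (h0 : ∑ k, w k = 0) (h1 : ∑ k, w k • p k = 0) (hp : ∃ k, 0 < w k)
    (hA : ∀ k, 0 < w k → p k ∈ A) (hB : ∀ k, w k < 0 → p k ∈ B) :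
    (convexHull ℝ A ∩ convexHull ℝ B).Nonempty := by
  classical
  set s := Finset.univ.filter (fun k => 0 < w k) with hs
  set t := Finset.univ.filter (fun k => ¬ 0 < w k) with ht
  have e0 : ∑ k ∈ s, w k + ∑ k ∈ t, w k = 0 := by
    rw [← h0]; exact Finset.sum_filter_add_sum_filter_not _ _ _
  have e1 : ∑ k ∈ s, w k • p k + ∑ k ∈ t, w k • p k = 0 := by
    rw [← h1]; exact Finset.sum_filter_add_sum_filter_not _ _ _
  have hspos : 0 < ∑ k ∈ s, w k := by
    obtain ⟨k, hk⟩ := hp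
    exact Finset.sum_pos (fun i hi => (Finset.mem_filter.1 hi).2) ⟨k, by simp [hs, hk]⟩
  set u := Finset.univ.filter (fun k => w k < 0) with hu
  have hut : u ⊆ t := by
    intro k hk
    simp only [hu, ht, Finset.mem_filter, Finset.mem_univ, true_and] at hk ⊢
    linarith
  have hz : ∀ k ∈ t, k ∉ u → w k = 0 := by
    intro k hk hk'
    simp only [hu, ht, Finset.mem_filter, Finset.mem_univ, true_and] at hk hk'
    linarith
  rw [← Finset.sum_subset hut hz] at e0
  rw [← Finset.sum_subset hut (fun k hk hk' => by rw [hz k hk hk', zero_smul])] at e1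
  refine ⟨s.centerMass w p, ?_, ?_⟩
  · exact Finset.centerMass_mem_convexHull _ (fun i hi => (Finset.mem_filter.1 hi).2.le) hspos
      (fun i hi => hA i (Finset.mem_filter.1 hi).2)
  · have : s.centerMass w p = u.centerMass (fun k => - w k) p := by
      simp only [Finset.centerMass, neg_smul, Finset.sum_neg_distrib]
      rw [eq_neg_of_add_eq_zero_left e0, eq_neg_of_add_eq_zero_left e1]
    rw [this]
    refine Finset.centerMass_mem_convexHull _
      (fun i hi => by have := (Finset.mem_filter.1 hi).2; linarith) ?_
      (fun i hi => hB i (Finset.mem_filter.1 hi).2)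
    rw [Finset.sum_neg_distrib]; linarith

theorem coords_inj : ∀ k l : Fin 8, X k = X l → k = l := by decide

theorem pt_inj : Function.Injective pt := by
  intro k l h
  apply coords_inj
  have := congrFun h 0
  simpa [pt] using this

theorem det_ne : ∀ i j k : Fin 8, i ≠ j → j ≠ k → i ≠ k →
    (X j - X i) * (Y k - Y i) - (Y j - Y i) * (X k - X i) ≠ 0 := by decide +kernel

theorem not_coll (i j k : Fin 8) (h1 : i ≠ j) (h2 : j ≠ k) (h3 : i ≠ k) :
    ¬ Collinear ℝ ({pt i, pt j, pt k} : Set (Fin 2 → ℝ)) := by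
  intro h
  rw [collinear_iff_of_mem (p₀ := pt i) (by simp)] at h
  obtain ⟨v, hv⟩ := h
  obtain ⟨r, hr⟩ := hv (pt j) (by simp)
  obtain ⟨s, hs⟩ := hv (pt k) (by simp)
  have a0 := congrFun hr 0
  have a1 := congrFun hr 1
  have b0 := congrFun hs 0
  have b1 := congrFun hs 1
  simp [pt] at a0 a1 b0 b1
  apply det_ne i j k h1 h2 h3
  have : ((X j : ℝ) - X i) * (Y k - Y i) - (Y j - Y i) * (X k - X i) = 0 := by
    rw [a0, a1, b0, b1]; ring
  exact_mod_cast this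

/-- No colouring of the eight points realises the path. -/
theorem no_colouring (f : Fin 8 → Fin 4) (Q : Fin 4 → Set (Fin 2 → ℝ))
    (hQ : ∀ k, pt k ∈ Q (f k)) (hQ' : ∀ j, ∀ x ∈ Q j, ∃ k, pt k = x ∧ f k = j)
    (h : ∀ i j : Fin 4, i ≠ j → ((convexHull ℝ (Q i) ∩ convexHull ℝ (Q j)).Nonempty ↔
              ((i : ℕ) + 1 = (j : ℕ) ∨ (j : ℕ) + 1 = (i : ℕ)))) : False := by
  obtain ⟨e, he, hT⟩ := exists_cert f
  by_cases hlt : e < 67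
  · obtain ⟨hadj, hk⟩ := sep_check e hlt
    refine sep_disj (Q (sepC e).1) (Q (sepC e).2.1) ((sepC e).2.2.1 : ℤ) ((sepC e).2.2.2.1 : ℤ)
      ((sepC e).2.2.2.2 : ℤ) ?_ ?_ ((h _ _ ?_).2 (Or.inl hadj))
    · intro x hx
      obtain ⟨k, rfl, hfk⟩ := hQ' _ x hx
      have := (hk k).1 (by rw [← hfk]; exact hT k)
      simp only [pt, Matrix.cons_val_zero, Matrix.cons_val_one]
      exact_mod_cast this
    · intro x hx
      obtain ⟨k, rfl, hfk⟩ := hQ' _ x hx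
      have := (hk k).2 (by rw [← hfk]; exact hT k)
      simp only [pt, Matrix.cons_val_zero, Matrix.cons_val_one]
      exact_mod_cast this
    · intro hij
      rw [hij] at hadj
      omega
  · obtain ⟨e', rfl⟩ : ∃ e', e = 67 + e' := ⟨e - 67, by omega⟩
    obtain ⟨⟨hne, hn1, hn2⟩, s0, sx, sy, ⟨k0, hk0⟩, hk⟩ := rad_check e' (by omega)
    have := (h _ _ hne).1 (rad_inter (Q (radC e').1) (Q (radC e').2.1) (fun k => (wt e' k : ℝ)) pt
      (by exact_mod_cast s0) ?_ ⟨k0, by exact_mod_cast hk0⟩ ?_ ?_)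
    · tauto
    · ext c
      fin_cases c
      · simp [pt, Finset.sum_apply]
        exact_mod_cast sx
      · simp [pt, Finset.sum_apply]
        exact_mod_cast sy
    · intro k hw
      rw [← (hk k _ (hT k)).1 (by exact_mod_cast hw)]
      exact hQ k
    · intro k hw
      rw [← (hk k _ (hT k)).2 (by exact_mod_cast hw)]
      exact hQ k

end P4Aux

/-- There is a set of 8 points in general position in the plane admitting no
partition into 4 parts whose nerve is isomorphic to the path `P₄` (i.e., up to relabeling,
exactly the pairs `{0,1}, {1,2}, {2,3}` of parts have intersecting convex hulls, and no
triple intersection is nonempty). Consequently `Tv(P₄, 2) ≥ 9`. -/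
theorem eight_points_without_P4 :
    ∃ S : Finset (Fin 2 → ℝ), S.card = 8 ∧
      -- general position: no three points collinear
      (∀ x ∈ S, ∀ y ∈ S, ∀ z ∈ S, x ≠ y → y ≠ z → x ≠ z →
        ¬ Collinear ℝ ({x, y, z} : Set (Fin 2 → ℝ))) ∧
      ∀ P : Fin 4 → Finset (Fin 2 → ℝ),
        (∀ i, (P i).Nonempty) →
        (∀ i j, i ≠ j → Disjoint (P i) (P j)) →
        S = Finset.univ.biUnion P →
        ¬ ∃ σ : Fin 4 ≃ Fin 4,
          (∀ i j : Fin 4, i ≠ j →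
            ((convexHull ℝ (P (σ i) : Set (Fin 2 → ℝ)) ∩
              convexHull ℝ (P (σ j) : Set (Fin 2 → ℝ))).Nonempty ↔
              ((i : ℕ) + 1 = (j : ℕ) ∨ (j : ℕ) + 1 = (i : ℕ)))) ∧
          (∀ i j k : Fin 4, i ≠ j → j ≠ k → i ≠ k →
            convexHull ℝ (P i : Set (Fin 2 → ℝ)) ∩
              convexHull ℝ (P j : Set (Fin 2 → ℝ)) ∩
              convexHull ℝ (P k : Set (Fin 2 → ℝ)) = ∅) := by
  classical
  refine ⟨Finset.univ.image P4Aux.pt, ?_, ?_, ?_⟩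
  · rw [Finset.card_image_of_injective _ P4Aux.pt_inj]; simp
  · intro x hx y hy z hz hxy hyz hxz
    obtain ⟨i, -, rfl⟩ := Finset.mem_image.1 hx
    obtain ⟨j, -, rfl⟩ := Finset.mem_image.1 hy
    obtain ⟨k, -, rfl⟩ := Finset.mem_image.1 hz
    exact P4Aux.not_coll i j k (fun h => hxy (by rw [h])) (fun h => hyz (by rw [h]))
      (fun h => hxz (by rw [h]))
  · rintro P - hdisj hS ⟨σ, hσ, -⟩
    have hex : ∀ k, ∃ j, P4Aux.pt k ∈ P (σ j) := by
      intro k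
      have : P4Aux.pt k ∈ Finset.univ.biUnion P := by
        rw [← hS]; exact Finset.mem_image_of_mem _ (Finset.mem_univ _)
      obtain ⟨i, -, hi⟩ := Finset.mem_biUnion.1 this
      exact ⟨σ.symm i, by simpa using hi⟩
    choose f hf using hex
    refine P4Aux.no_colouring f (fun j => (P (σ j) : Set (Fin 2 → ℝ))) (fun k => hf k) ?_ hσ
    intro j x hx
    have hx' : x ∈ P (σ j) := hx
    have hxS : x ∈ Finset.univ.image P4Aux.pt := by
      rw [hS]; exact Finset.mem_biUnion.2 ⟨_, Finset.mem_univ _, hx'⟩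
    obtain ⟨k, -, rfl⟩ := Finset.mem_image.1 hxS
    refine ⟨k, rfl, ?_⟩
    by_contra hne
    exact Finset.disjoint_left.1 (hdisj _ _ (fun h => hne (σ.injective h))) (hf k) hx'
end
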